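/- arXiv:0908.0778 — 3 statements merged into one kernel-verified Lean document; each statement's English description precedes it below -/
import Mathlib

section
/- Let V be a C⁵ perturbed quartic potential with ℓ ∈ {−1,1} equal to the sign of V⁽⁴⁾(0), and let T(v) be its period map. There exist K > 0 and C > 0 such that for every integer n ≥ 1 and every t ∈ (0, Kn]: (i) there is a well-defined γ_{n,t} > 0 with T(γ_{n,t}) = 2π − 2ℓt/n; (ii) |γ_{n,t}² − 8t/(3πn)| ≤ C (t/n)^{3/2}, so in particular γ_{n,t} = O((t/n)^{1/2}); (iii) for every v ∈ [−1,1], |(n/2)·T(γ_{n,t} v) − (nπ − ℓt + ℓt(1 − v²))| ≤ C t^{3/2}/n^{1/2}. -/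
open Real Filter Asymptotics Topology

/-- `V` is a C⁵ perturbed quartic potential `V(x) = x²/2 + ℓx⁴/4 + f(x)` with
`ℓ ∈ {-1,1}` (equal to the sign of `V⁽⁴⁾(0)`) and `|f⁽ⁱ⁾(x)| = O(|x|^{5-i})` as `x → 0`. -/
def PerturbedQuartic (V f : ℝ → ℝ) (l : ℝ) : Prop :=
  (l = 1 ∨ l = -1) ∧ ContDiff ℝ 5 f ∧
  (∀ x : ℝ, V x = x ^ 2 / 2 + l * x ^ 4 / 4 + f x) ∧
  (∀ i : ℕ, i ≤ 5 → (iteratedDeriv i f) =O[𝓝 0] fun x : ℝ => |x| ^ (5 - i))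


/-- basic pointwise estimates -/
lemma est_basic (l M : ℝ) (hl : |l| = 1) (hM : 0 < M) (x a b c k : ℝ) (hk : k = 3 + 2 * M)
    (hx : 0 < x) (hx1 : x ≤ 1) (hkx : k * x ≤ 1 / 2)
    (ha : |a| ≤ M * x ^ 5) (hb : |b| ≤ M * x ^ 4) (hc : |c| ≤ M * x ^ 3) :
    ∃ p q r s : ℝ, x + l * x ^ 3 + b = x * (1 + p) ∧
      2 * (x ^ 2 / 2 + l * x ^ 4 / 4 + a) = x ^ 2 * (1 + q) ∧
      1 + 3 * l * x ^ 2 + c = 1 + r ∧ |p| ≤ k * x ^ 2 ∧ |q| ≤ k * x ^ 2 ∧ |r| ≤ k * x ^ 2 ∧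
      2 * p - q - r = - (3 / 2) * l * x ^ 2 + s ∧ |s| ≤ 5 * M * x ^ 3 ∧ |p| ≤ 1 / 2 ∧ |q| ≤ 1/2 := by
  have hA : |a / x ^ 2| ≤ M * x ^ 3 := by
    rw [abs_div, abs_of_pos (by positivity : (0:ℝ) < x ^ 2), div_le_iff₀ (by positivity)]
    calc |a| ≤ _ := ha
      _ = _ := by ring
  have hB : |b / x| ≤ M * x ^ 3 := by
    rw [abs_div, abs_of_pos hx, div_le_iff₀ (by positivity)]
    calc |b| ≤ _ := hb
      _ = _ := by ring
  have h32 : M * x ^ 3 ≤ M * x ^ 2 := by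
    have : x ^ 3 ≤ x ^ 2 := pow_le_pow_of_le_one hx.le hx1 (by norm_num)
    gcongr
  have hx2 : 0 < x ^ 2 := by positivity
  have hkk : k * x ^ 2 ≤ 1 / 2 := by nlinarith
  have hl2 : -x^2 ≤ l * x ^ 2 ∧ l * x ^ 2 ≤ x ^ 2 := by
    have := abs_le.1 hl.le
    constructor <;> nlinarith
  rw [abs_le] at hA hB hc
  have hp : |l * x ^ 2 + b / x| ≤ k * x ^ 2 := by
    rw [abs_le]; subst hk; constructor <;> nlinarith
  have hq : |l * x ^ 2 / 2 + 2 * (a / x ^ 2)| ≤ k * x ^ 2 := by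
    rw [abs_le]; subst hk; constructor <;> nlinarith
  refine ⟨l * x ^ 2 + b / x, l * x ^ 2 / 2 + 2 * (a / x ^ 2), 3 * l * x ^ 2 + c,
    2 * (b / x) - 2 * (a / x ^ 2) - c, ?_, ?_, by ring, hp, hq, ?_, by ring, ?_,
    hp.trans hkk, hq.trans hkk⟩
  · field_simp; ring
  · field_simp; ring
  · rw [abs_le]; subst hk; constructor <;> nlinarith
  · rw [abs_le]; constructor <;> nlinarith

lemma est_deriv (l M k x v p q r s : ℝ) (hl : |l| = 1) (hM : 0 < M) (hk : k = 3 + 2 * M)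
    (hx : 0 < x) (hx1 : x ≤ 1) (hv : 0 < v) (hv2 : v ^ 2 = x ^ 2 * (1 + q))
    (hp : |p| ≤ k * x ^ 2) (hq : |q| ≤ k * x ^ 2) (hr : |r| ≤ k * x ^ 2)
    (hs : 2 * p - q - r = - (3 / 2) * l * x ^ 2 + s) (hs2 : |s| ≤ 5 * M * x ^ 3)
    (hp2 : |p| ≤ 1 / 2) (hq2 : |q| ≤ 1 / 2) :
    |((x * (1 + p)) ^ 2 - v ^ 2 * (1 + r)) / (x * (1 + p)) ^ 3 + 3 / 2 * l * v|
      ≤ (8 * (5 * M + 2 * k ^ 2) + 60 * k + 2 * k) * x ^ 2 ∧ x ≤ 2 * v ∧ v ≤ 2 * x ∧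
    |v / (x * (1 + p)) - 1| ≤ 4 * k * x ^ 2 := by
  have hk0 : 0 < k := by linarith
  have hp3 := abs_le.1 hp2
  have hq3 := abs_le.1 hq2
  have hx2 : 0 < x ^ 2 := by positivity
  have h1 : x ≤ 2 * v := by
    by_contra h
    nlinarith
  have h2 : v ≤ 2 * x := by
    by_contra h
    nlinarith
  have hvx : |v - x| ≤ k * x ^ 3 := by
    have e : (v - x) * (v + x) = x ^ 2 * q := by nlinarith
    have e2 : |v - x| * (v + x) = x ^ 2 * |q| := by
      rw [← abs_of_pos (by positivity : 0 < v + x), ← abs_mul, e, abs_mul, abs_of_pos hx2]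
    have : |v - x| * x ≤ k * x ^ 3 * x := by
      calc |v - x| * x ≤ |v - x| * (v + x) := by gcongr; linarith
        _ = x ^ 2 * |q| := e2
        _ ≤ x ^ 2 * (k * x ^ 2) := by gcongr
        _ = _ := by ring
    exact le_of_mul_le_mul_right this hx
  have hp1 : 1 / 2 ≤ 1 + p := by linarith
  have hp10 : 0 < 1 + p := by linarith
  refine ⟨?_, h1, h2, ?_⟩
  · -- main
    have e : ((x * (1 + p)) ^ 2 - v ^ 2 * (1 + r)) / (x * (1 + p)) ^ 3 + 3 / 2 * l * v
        = (s + p ^ 2 - q * r) / (x * (1 + p) ^ 3)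
          + 3 / 2 * l * (x * (p * (3 + 3 * p + p ^ 2)) / (1 + p) ^ 3)
          + 3 / 2 * l * (v - x) := by
      have hs' : s = 2 * p - q - r + 3 / 2 * l * x ^ 2 := by linarith
      rw [hv2, hs']
      field_simp
      ring
    have hcube : 1 / 8 ≤ (1 + p) ^ 3 := by
      calc (1:ℝ) / 8 = (1 / 2) ^ 3 := by norm_num
        _ ≤ _ := by gcongr
    have b1 : |(s + p ^ 2 - q * r) / (x * (1 + p) ^ 3)| ≤ 8 * (5 * M + 2 * k ^ 2) * x ^ 2 := by
      rw [abs_div, abs_of_pos (by positivity : 0 < x * (1 + p) ^ 3), div_le_iff₀ (by positivity)]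
      have : |s + p ^ 2 - q * r| ≤ (5 * M + 2 * k ^ 2) * x ^ 3 := by
        have hpp : |p ^ 2| ≤ k ^ 2 * x ^ 3 := by
          rw [abs_pow]
          calc |p| ^ 2 ≤ (k * x ^ 2) ^ 2 := by gcongr
            _ = k ^ 2 * x ^ 3 * x := by ring
            _ ≤ k ^ 2 * x ^ 3 * 1 := by gcongr
            _ = _ := by ring
        have hqr : |q * r| ≤ k ^ 2 * x ^ 3 := by
          rw [abs_mul]
          calc |q| * |r| ≤ (k * x ^ 2) * (k * x ^ 2) := by gcongr
            _ = k ^ 2 * x ^ 3 * x := by ring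
            _ ≤ k ^ 2 * x ^ 3 * 1 := by gcongr
            _ = _ := by ring
        refine (abs_sub _ _).trans ((add_le_add_left (abs_add_le _ _) _).trans ?_)
        linarith
      calc _ ≤ (5 * M + 2 * k ^ 2) * x ^ 3 := this
        _ = 8 * (5 * M + 2 * k ^ 2) * x ^ 2 * (x * (1 / 8)) := by ring
        _ ≤ _ := by gcongr
    have b2 : |3 / 2 * l * (x * (p * (3 + 3 * p + p ^ 2)) / (1 + p) ^ 3)| ≤ 60 * k * x ^ 2 := by
      rw [abs_mul, abs_mul, hl, abs_of_pos (by norm_num : (0:ℝ) < 3 / 2), abs_div, abs_mul, abs_mul, abs_of_pos hx,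
        abs_of_pos (by positivity : 0 < (1 + p) ^ 3)]
      have h5 : |3 + 3 * p + p ^ 2| ≤ 5 := by
        have h6 : p ^ 2 ≤ 1 / 4 := by
          rw [← sq_abs]
          calc |p| ^ 2 ≤ (1 / 2) ^ 2 := by gcongr
            _ = _ := by norm_num
        have h7 := sq_nonneg p
        rw [abs_le]; constructor <;> linarith
      have : x * (|p| * |3 + 3 * p + p ^ 2|) / (1 + p) ^ 3 ≤ 40 * k * x ^ 2 := by
        rw [div_le_iff₀ (by positivity)]
        calc _ ≤ 1 * ((k * x ^ 2) * 5) := by gcongr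
          _ = 40 * k * x ^ 2 * (1 / 8) := by ring
          _ ≤ _ := by gcongr
      linarith
    have b3 : |3 / 2 * l * (v - x)| ≤ 2 * k * x ^ 2 := by
      rw [abs_mul, abs_mul, hl, abs_of_pos (by norm_num : (0:ℝ) < 3 / 2)]
      have : k * x ^ 3 ≤ k * x ^ 2 := by
        have : x ^ 3 ≤ x ^ 2 := pow_le_pow_of_le_one hx.le hx1 (by norm_num)
        gcongr
      have : 0 ≤ k * x ^ 2 := by positivity
      linarith
    rw [e]
    refine (abs_add_three _ _ _).trans ?_
    linarith
  · have e : v / (x * (1 + p)) - 1 = ((v - x) - x * p) / (x * (1 + p)) := by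
      field_simp; ring
    rw [e, abs_div, abs_of_pos (by positivity : 0 < x * (1 + p)), div_le_iff₀ (by positivity)]
    calc _ ≤ |v - x| + |x * p| := abs_sub _ _
      _ ≤ k * x ^ 3 + x * (k * x ^ 2) := by
        rw [abs_mul, abs_of_pos hx]; gcongr
      _ = 4 * k * x ^ 2 * (x * (1 / 2)) := by ring
      _ ≤ _ := by gcongr


lemma one_sided_X (f f1 f2 : ℝ → ℝ) (l M d v1 : ℝ) (hl : |l| = 1) (hM : 0 < M) (hd : 0 < d)
    (hv1 : 0 < v1)
    (hf : ∀ x, 0 < x → x < d → HasDerivAt f (f1 x) x)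
    (hf1 : ∀ x, 0 < x → x < d → HasDerivAt f1 (f2 x) x)
    (b0 : ∀ x, 0 < x → x < d → |f x| ≤ M * x ^ 5)
    (b1 : ∀ x, 0 < x → x < d → |f1 x| ≤ M * x ^ 4)
    (b2 : ∀ x, 0 < x → x < d → |f2 x| ≤ M * x ^ 3)
    (V : ℝ → ℝ) (hV : ∀ x, V x = x ^ 2 / 2 + l * x ^ 4 / 4 + f x)
    (X : ℝ → ℝ) (hX : ∀ v, 0 < v → v < v1 → 0 < X v ∧ V (X v) = v ^ 2 / 2)
    (hX0 : Tendsto X (𝓝[>] 0) (𝓝 0)) :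
    ∃ δ > (0:ℝ), ∃ η > (0:ℝ), ∃ C > (0:ℝ), ∃ X' X'' : ℝ → ℝ, η ≤ v1 ∧
      (∀ v, 0 < v → v < η → 0 < X v ∧ X v < δ ∧ HasDerivAt X (X' v) v ∧ HasDerivAt X' (X'' v) v ∧
        0 < X' v ∧ |X'' v + 3 / 2 * l * v| ≤ C * v ^ 2 ∧ |X' v - 1| ≤ C * v ^ 2) ∧
      (∀ x, 0 < x → x < δ → 0 < V x) ∧
      StrictMonoOn V (Set.Ioo 0 δ) ∧ StrictMonoOn X (Set.Ioo 0 η) := by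
  set k := 3 + 2 * M with hk
  have hk0 : 0 < k := by positivity
  set δ := min d (min 1 (1 / (2 * k))) with hδ
  have hδ0 : 0 < δ := by positivity
  have hδd : ∀ {x}, x < δ → x < d := fun h => h.trans_le (min_le_left _ _)
  have hδ1 : ∀ {x}, x < δ → x ≤ 1 := fun h =>
    (h.trans_le ((min_le_right _ _).trans (min_le_left _ _))).le
  have hδk : ∀ {x}, x < δ → k * x ≤ 1 / 2 := fun {x} h => by
    have := (h.trans_le ((min_le_right _ _).trans (min_le_right _ _))).le
    rw [le_div_iff₀ (by positivity)] at this
    linarith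
  have P := fun x (h0 : 0 < x) (h : x < δ) => est_basic l M hl hM x (f x) (f1 x) (f2 x) k hk h0
    (hδ1 h) (hδk h) (b0 x h0 (hδd h)) (b1 x h0 (hδd h)) (b2 x h0 (hδd h))
  set W : ℝ → ℝ := fun x => x + l * x ^ 3 + f1 x with hW
  set U : ℝ → ℝ := fun x => 1 + 3 * l * x ^ 2 + f2 x with hU
  have dV : ∀ x, 0 < x → x < δ → HasDerivAt V (W x) x := by
    intro x h0 h
    have h1 := ((((hasDerivAt_id x).pow 2).div_const 2).add
      ((((hasDerivAt_id x).pow 4).const_mul l).div_const 4)).add (hf x h0 (hδd h))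
    refine (h1.congr_deriv ?_).congr_of_eventuallyEq (Eventually.of_forall fun y => ?_)
    · simp [hW]; ring
    · simp [hV]
  have dW : ∀ x, 0 < x → x < δ → HasDerivAt W (U x) x := by
    intro x h0 h
    have h1 := ((hasDerivAt_id x).add
      (((hasDerivAt_id x).pow 3).const_mul l)).add (hf1 x h0 (hδd h))
    refine (h1.congr_deriv ?_).congr_of_eventuallyEq (Eventually.of_forall fun y => ?_)
    · simp [hU]; ring
    · simp [hW]
  have W0 : ∀ x, 0 < x → x < δ → 0 < W x := by
    intro x h0 h
    obtain ⟨p, q, r, s, h1, h2, h3, h4, h5, h6, h7, h8, h9, h10⟩ := P x h0 h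
    have := abs_le.1 h9
    simp only [hW]; rw [h1]
    exact mul_pos h0 (by linarith)
  have V0 : ∀ x, 0 < x → x < δ → 0 < V x := by
    intro x h0 h
    obtain ⟨p, q, r, s, h1, h2, h3, h4, h5, h6, h7, h8, h9, h10⟩ := P x h0 h
    have := abs_le.1 h10
    have : 0 < x ^ 2 * (1 + q) := mul_pos (by positivity) (by linarith)
    rw [hV]; linarith
  have Vm : StrictMonoOn V (Set.Ioo 0 δ) := by
    apply strictMonoOn_of_deriv_pos (convex_Ioo _ _)
    · intro x hx; exact (dV x hx.1 hx.2).continuousAt.continuousWithinAt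
    · intro x hx
      rw [interior_Ioo] at hx
      rw [(dV x hx.1 hx.2).deriv]; exact W0 x hx.1 hx.2
  have hev : ∀ᶠ v in 𝓝[>] (0:ℝ), X v < δ := hX0.eventually_lt_const hδ0
  obtain ⟨η1, hη1, hη1'⟩ := mem_nhdsGT_iff_exists_Ioo_subset.1 hev
  simp only [Set.mem_Ioi] at hη1
  set η := min η1 v1 with hη
  have hη0 : 0 < η := lt_min hη1 hv1
  have Xp : ∀ v, 0 < v → v < η → 0 < X v ∧ X v < δ ∧ V (X v) = v ^ 2 / 2 := by
    intro v h0 h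
    obtain ⟨h1, h2⟩ := hX v h0 (h.trans_le (min_le_right _ _))
    exact ⟨h1, hη1' ⟨h0, h.trans_le (min_le_left _ _)⟩, h2⟩
  have Xm : StrictMonoOn X (Set.Ioo 0 η) := by
    intro a ha b hb hab
    obtain ⟨a1, a2, a3⟩ := Xp a ha.1 ha.2
    obtain ⟨c1, c2, c3⟩ := Xp b hb.1 hb.2
    rw [← Vm.lt_iff_lt ⟨a1, a2⟩ ⟨c1, c2⟩, a3, c3]
    have := ha.1
    nlinarith
  have Xc : ∀ v, 0 < v → v < η → ContinuousAt X v := by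
    intro v h0 h
    refine Xm.continuousAt_of_image_mem_nhds (Ioo_mem_nhds h0 h) ?_
    obtain ⟨v', hv', hv''⟩ := exists_between h
    have hv0 := h0.trans hv'
    obtain ⟨c1, c2, c3⟩ := Xp v' hv0 hv''
    refine mem_of_superset (Ioo_mem_nhds (Xp v h0 h).1 (Xm ⟨h0, h⟩ ⟨hv0, hv''⟩ hv')) ?_
    intro x hx
    have hxδ := hx.2.trans c2
    have q0 := V0 x hx.1 hxδ
    have q1 : V x < v' ^ 2 / 2 := by rw [← c3]; exact Vm ⟨hx.1, hxδ⟩ ⟨c1, c2⟩ hx.2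
    have q2 : √(2 * V x) < v' := by
      rw [Real.sqrt_lt' hv0]; linarith
    have q3 : 0 < √(2 * V x) := by positivity
    refine ⟨√(2 * V x), ⟨q3, q2.trans hv''⟩, ?_⟩
    obtain ⟨e1, e2, e3⟩ := Xp _ q3 (q2.trans hv'')
    apply Vm.injOn ⟨e1, e2⟩ ⟨hx.1, hxδ⟩
    rw [e3, Real.sq_sqrt (by positivity)]; ring
  have dX : ∀ v, 0 < v → v < η → HasDerivAt X (v / W (X v)) v := by
    intro v h0 h
    obtain ⟨c1, c2, c3⟩ := Xp v h0 h
    have hs : √(2 * V (X v)) = v := by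
      rw [c3, show 2 * (v ^ 2 / 2) = v ^ 2 by ring, Real.sqrt_sq h0.le]
    have h1 : HasDerivAt (fun x => √(2 * V x)) (W (X v) / v) (X v) := by
      have := ((dV _ c1 c2).const_mul 2).sqrt (by have := V0 _ c1 c2; positivity)
      rw [hs] at this
      convert this using 1
      field_simp
    have := HasDerivAt.of_local_left_inverse (Xc v h0 h) h1
      (div_pos (W0 _ c1 c2) h0).ne' ?_
    · rwa [inv_div] at this
    · filter_upwards [Ioo_mem_nhds h0 h] with w hw
      rw [(Xp w hw.1 hw.2).2.2, show 2 * (w ^ 2 / 2) = w ^ 2 by ring, Real.sqrt_sq hw.1.le]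
  set C := 4 * (8 * (5 * M + 2 * k ^ 2) + 60 * k + 2 * k) + 16 * k with hC
  refine ⟨δ, hδ0, η, hη0, C, by positivity, fun v => v / W (X v),
    fun v => ((W (X v)) ^ 2 - v ^ 2 * U (X v)) / W (X v) ^ 3, min_le_right _ _, ?_, V0, Vm, Xm⟩
  intro v h0 h
  obtain ⟨c1, c2, c3⟩ := Xp v h0 h
  have hWp := W0 _ c1 c2
  refine ⟨c1, c2, dX v h0 h, ?_, div_pos h0 hWp, ?_⟩
  · have h1 := (hasDerivAt_id v).div ((dW _ c1 c2).comp v (dX v h0 h)) hWp.ne'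
    refine (h1.congr_deriv ?_).congr_of_eventuallyEq (Eventually.of_forall fun y => ?_)
    · simp only [id, Function.comp]
      field_simp
    · simp
  · obtain ⟨p, q, r, s, h1, h2, h3, h4, h5, h6, h7, h8, h9, h10⟩ := P _ c1 c2
    have hv2 : v ^ 2 = X v ^ 2 * (1 + q) := by
      rw [← h2, ← hV, c3]; ring
    obtain ⟨e1, e2, e3, e4⟩ := est_deriv l M k (X v) v p q r s hl hM hk c1 (hδ1 c2) h0 hv2
      h4 h5 h6 h7 h8 h9 h10
    have hWe : W (X v) = X v * (1 + p) := h1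
    have hUe : U (X v) = 1 + r := h3
    simp only [hWe, hUe]
    have hx2 : X v ^ 2 ≤ 4 * v ^ 2 := by nlinarith
    have hvv : 0 ≤ v ^ 2 := by positivity
    constructor
    · refine e1.trans ?_
      calc _ ≤ (8 * (5 * M + 2 * k ^ 2) + 60 * k + 2 * k) * (4 * v ^ 2) := by gcongr
        _ ≤ C * v ^ 2 := by
          have : 0 ≤ 16 * k * v ^ 2 := by positivity
          rw [hC]; linarith
    · refine e4.trans ?_
      calc _ ≤ 4 * k * (4 * v ^ 2) := by gcongr
        _ ≤ C * v ^ 2 := by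
          have : 0 ≤ 4 * (8 * (5 * M + 2 * k ^ 2) + 60 * k + 2 * k) * v ^ 2 := by positivity
          rw [hC]; linarith


lemma one_sided (f f1 f2 : ℝ → ℝ) (l M d v1 : ℝ) (hl : |l| = 1) (hM : 0 < M) (hd : 0 < d)
    (hv1 : 0 < v1)
    (hf : ∀ x, 0 < x → x < d → HasDerivAt f (f1 x) x)
    (hf1 : ∀ x, 0 < x → x < d → HasDerivAt f1 (f2 x) x)
    (b0 : ∀ x, 0 < x → x < d → |f x| ≤ M * x ^ 5)
    (b1 : ∀ x, 0 < x → x < d → |f1 x| ≤ M * x ^ 4)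
    (b2 : ∀ x, 0 < x → x < d → |f2 x| ≤ M * x ^ 3)
    (V : ℝ → ℝ) (hV : ∀ x, V x = x ^ 2 / 2 + l * x ^ 4 / 4 + f x)
    (X : ℝ → ℝ) (hX : ∀ v, 0 < v → v < v1 → 0 < X v ∧ V (X v) = v ^ 2 / 2)
    (hX0 : Tendsto X (𝓝[>] 0) (𝓝 0)) :
    ∃ δ > (0:ℝ), ∃ η > (0:ℝ), ∃ C > (0:ℝ), ∃ g : ℝ → ℝ, η ≤ v1 ∧
      ContinuousOn g (Set.Icc 0 η) ∧ g 0 = 1 ∧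
      (∀ a b, 0 ≤ b → b ≤ a → a ≤ η →
        |g a - g b + 3 / 4 * l * (a ^ 2 - b ^ 2)| ≤ C * a ^ 2 * (a - b)) ∧
      (∀ v, 0 < v → v < η → ∀ x, 0 < x → x < δ → V x = v ^ 2 / 2 → x = X v) ∧
      (∀ v, 0 < v → v < η →
        IntervalIntegrable (fun x => (√(v ^ 2 / 2 - V x))⁻¹) MeasureTheory.volume 0 (X v) ∧
        ∫ x in (0:ℝ)..(X v), (√(v ^ 2 / 2 - V x))⁻¹
          = √2 * ∫ θ in (0:ℝ)..(π / 2), g (v * sin θ)) := by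
  obtain ⟨δ, hδ, η, hη, C, hC, X', X'', hηv, H, V0, Vm, Xm⟩ :=
    one_sided_X f f1 f2 l M d v1 hl hM hd hv1 hf hf1 b0 b1 b2 V hV X hX hX0
  set g : ℝ → ℝ := fun v => if v ≤ 0 then 1 else X' v with hg
  have gpos : ∀ v, 0 < v → g v = X' v := fun v hv => by simp [hg, hv]
  have g0 : g 0 = 1 := by simp [hg]
  have dg : ∀ v, 0 < v → v < η → HasDerivAt g (X'' v) v := by
    intro v h0 h
    refine (H v h0 h).2.2.2.1.congr_of_eventuallyEq ?_
    filter_upwards [Ioi_mem_nhds h0] with w hw using gpos w hw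
  have gc : ContinuousOn g (Set.Ico 0 η) := by
    intro v hv
    rcases hv.1.eq_or_lt with h0 | h0
    · subst h0
      rw [ContinuousWithinAt, g0, tendsto_iff_norm_sub_tendsto_zero]
      have hlim : Tendsto (fun v : ℝ => C * v ^ 2) (𝓝[Set.Ico 0 η] 0) (𝓝 0) := by
        have : Continuous fun v : ℝ => C * v ^ 2 := by fun_prop
        simpa using (this.tendsto 0).mono_left nhdsWithin_le_nhds
      refine squeeze_zero' (Eventually.of_forall fun _ => norm_nonneg _) ?_ hlim
      filter_upwards [self_mem_nhdsWithin] with w hw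
      rw [Real.norm_eq_abs]
      rcases hw.1.eq_or_lt with h1 | h1
      · subst h1; simp [g0]
      · rw [gpos w h1]; exact (H w h1 hw.2).2.2.2.2.2.2
    · exact (dg v h0 hv.2).continuousAt.continuousWithinAt
  have inv : ∀ v, 0 < v → v < η → ∀ x, 0 < x → x < δ → V x = v ^ 2 / 2 → x = X v := by
    intro v h0 h x hx hxδ e
    obtain ⟨c1, c2, -⟩ := H v h0 h
    exact Vm.injOn ⟨hx, hxδ⟩ ⟨c1, c2⟩ (e.trans (hX v h0 (h.trans_le hηv)).2.symm)
  refine ⟨δ, hδ, η / 2, by positivity, C, hC, g, by linarith,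
    gc.mono fun v hv => ⟨hv.1, by have := hv.2; linarith⟩, g0, ?_,
    fun v h0 h => inv v h0 (by linarith), ?_⟩
  · intro a b hb hba ha
    rcases hba.eq_or_lt with e | hba
    · subst e; simp
    have hr : ContinuousOn (fun y => g y + 3 / 4 * l * y ^ 2) (Set.Icc b a) := by
      refine ContinuousOn.add (gc.mono fun v hv => ⟨hb.trans hv.1, ?_⟩) (by fun_prop)
      have := hv.2; linarith
    obtain ⟨c, hc, hc2⟩ := exists_hasDerivAt_eq_slope (fun y => g y + 3 / 4 * l * y ^ 2)
      (fun y => X'' y + 3 / 2 * l * y) hba hr (by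
        intro y hy
        have h1 := (dg y (hb.trans_lt hy.1) (by have := hy.2; linarith)).add
          (((hasDerivAt_id y).pow 2).const_mul (3 / 4 * l))
        refine (h1.congr_deriv ?_).congr_of_eventuallyEq (Eventually.of_forall fun y => ?_)
        · simp; ring
        · simp)
    have hc0 := hb.trans_lt hc.1
    have hcη : c < η := by have := hc.2; linarith
    have e : g a - g b + 3 / 4 * l * (a ^ 2 - b ^ 2) = (X'' c + 3 / 2 * l * c) * (a - b) := by
      rw [hc2]
      have : a - b ≠ 0 := by linarith
      field_simp; ring
    have hab : 0 < a - b := by linarith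
    rw [e, abs_mul, abs_of_pos hab]
    have h2 := hc.2.le
    have := (H c hc0 hcη).2.2.2.2.2.1
    calc _ ≤ C * c ^ 2 * (a - b) := by gcongr
      _ ≤ _ := by gcongr
  · intro v h0 h'
    have h : v < η := by linarith
    obtain ⟨c1, c2, -⟩ := H v h0 h
    have c3 := (hX v h0 (h.trans_le hηv)).2
    set S := Set.Ioo (0:ℝ) (π / 2) with hS
    set φ : ℝ → ℝ := fun θ => X (v * sin θ) with hφ
    set φ' : ℝ → ℝ := fun θ => X' (v * sin θ) * (v * cos θ) with hφ'
    have pi0 := Real.pi_pos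
    have sp : ∀ θ ∈ S, 0 < sin θ ∧ sin θ < 1 ∧ 0 < cos θ := by
      intro θ hθ
      have a1 : 0 < sin θ := sin_pos_of_pos_of_lt_pi hθ.1 (by have := hθ.2; linarith)
      have a2 : 0 < cos θ := cos_pos_of_mem_Ioo ⟨by have := hθ.1; linarith, hθ.2⟩
      refine ⟨a1, ?_, a2⟩
      nlinarith [sin_sq_add_cos_sq θ]
    have vp : ∀ θ ∈ S, 0 < v * sin θ ∧ v * sin θ < v := by
      intro θ hθ
      obtain ⟨s1, s2, s3⟩ := sp θ hθ
      exact ⟨by positivity, by nlinarith⟩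
    have dφ : ∀ θ ∈ S, HasDerivWithinAt φ (φ' θ) S θ := by
      intro θ hθ
      obtain ⟨s1, s2⟩ := vp θ hθ
      exact ((H _ s1 (s2.trans h)).2.2.1.comp θ ((hasDerivAt_sin θ).const_mul v)).hasDerivWithinAt
    have iφ : Set.InjOn φ S := by
      intro a ha b hb hab
      obtain ⟨s1, s2⟩ := vp a ha
      obtain ⟨t1, t2⟩ := vp b hb
      have := Xm.injOn ⟨s1, s2.trans h⟩ ⟨t1, t2.trans h⟩ hab
      have := mul_left_cancel₀ h0.ne' this
      exact injOn_sin ⟨by have := ha.1; linarith, ha.2.le⟩ ⟨by have := hb.1; linarith, hb.2.le⟩ this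
    have im : φ '' S = Set.Ioo 0 (X v) := by
      ext x
      constructor
      · rintro ⟨θ, hθ, rfl⟩
        obtain ⟨s1, s2⟩ := vp θ hθ
        exact ⟨(H _ s1 (s2.trans h)).1, Xm ⟨s1, s2.trans h⟩ ⟨h0, h⟩ s2⟩
      · intro hx
        have hxδ := hx.2.trans c2
        have q0 := V0 x hx.1 hxδ
        have q1 : V x < v ^ 2 / 2 := by rw [← c3]; exact Vm ⟨hx.1, hxδ⟩ ⟨c1, c2⟩ hx.2
        have q2 : √(2 * V x) < v := by
          rw [Real.sqrt_lt' h0]; linarith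
        have q3 : 0 < √(2 * V x) := by positivity
        have q4 : √(2 * V x) / v < 1 := by rwa [div_lt_one h0]
        have q5 : 0 < √(2 * V x) / v := by positivity
        refine ⟨arcsin (√(2 * V x) / v), ⟨arcsin_pos.2 q5, arcsin_lt_pi_div_two.2 q4⟩, ?_⟩
        simp only [hφ]
        rw [sin_arcsin (by linarith) q4.le, mul_div_cancel₀ _ h0.ne']
        refine (inv _ q3 (q2.trans h) x hx.1 hxδ ?_).symm
        rw [Real.sq_sqrt (by positivity)]; ring
    have key : ∀ θ ∈ S, |φ' θ| • (√(v ^ 2 / 2 - V (φ θ)))⁻¹ = √2 * g (v * sin θ) := by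
      intro θ hθ
      obtain ⟨s1, s2⟩ := vp θ hθ
      obtain ⟨-, -, s3⟩ := sp θ hθ
      have hVe : V (φ θ) = (v * sin θ) ^ 2 / 2 := (hX _ s1 ((s2.trans h).trans_le hηv)).2
      have hXp := (H _ s1 (s2.trans h)).2.2.2.2.1
      rw [hVe, gpos _ s1, show v ^ 2 / 2 - (v * sin θ) ^ 2 / 2 = (v * cos θ) ^ 2 / 2 by
        have := sin_sq_add_cos_sq θ
        rw [mul_pow, mul_pow, cos_sq']; ring, Real.sqrt_div (sq_nonneg _),
        Real.sqrt_sq (by positivity), hφ', abs_of_pos (by positivity), smul_eq_mul]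
      field_simp
    have hSm : MeasurableSet S := measurableSet_Ioo
    have cont : ContinuousOn (fun θ => g (v * sin θ)) (Set.Icc 0 (π / 2)) := by
      refine gc.comp (by fun_prop) ?_
      intro θ hθ
      have a1 : 0 ≤ sin θ := sin_nonneg_of_nonneg_of_le_pi hθ.1 (by have := hθ.2; linarith)
      exact ⟨by positivity, by nlinarith [sin_le_one θ]⟩
    constructor
    · rw [intervalIntegrable_iff_integrableOn_Ioo_of_le c1.le, ← im,
        MeasureTheory.integrableOn_image_iff_integrableOn_abs_deriv_smul hSm dφ iφ]
      refine MeasureTheory.IntegrableOn.congr_fun ?_ (fun θ hθ => (key θ hθ).symm) hSm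
      exact ((cont.const_smul (√2)).integrableOn_Icc).mono_set Set.Ioo_subset_Icc_self
    · rw [intervalIntegral.integral_of_le c1.le, MeasureTheory.integral_Ioc_eq_integral_Ioo, ← im,
        MeasureTheory.integral_image_eq_integral_abs_deriv_smul hSm dφ iφ,
        MeasureTheory.setIntegral_congr_fun hSm key, MeasureTheory.integral_const_mul,
        intervalIntegral.integral_of_le (by positivity), MeasureTheory.integral_Ioc_eq_integral_Ioo]


lemma scaling (S : ℝ → ℝ) (η C : ℝ) (hη : 0 < η) (hC : 0 < C) (S0 : S 0 = 0)
    (hS : ∀ a b, 0 ≤ b → b ≤ a → a ≤ η →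
      |S a - S b - 3 * π / 4 * (a ^ 2 - b ^ 2)| ≤ C * a ^ 2 * (a - b)) :
    ∃ K > (0:ℝ), ∃ v₂ > (0:ℝ), v₂ ≤ η ∧ ∀ s, 0 < s → s ≤ K → ∃ γ, 0 < γ ∧ γ < v₂ ∧ S γ = s ∧
      (∀ γ', 0 < γ' → γ' < v₂ → S γ' = s → γ' = γ) ∧ γ ≤ √s ∧
      |γ ^ 2 - 4 * s / (3 * π)| ≤ C * √s ^ 3 ∧
      ∀ u, 0 ≤ u → u ≤ 1 → |S (γ * u) - s * u ^ 2| ≤ 2 * C * √s ^ 3 := by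
  have hpi := Real.pi_gt_three
  set v₂ := min η (1 / C) with hv
  have hv0 : 0 < v₂ := by positivity
  have hvη : v₂ ≤ η := min_le_left _ _
  have hvC : ∀ a, a ≤ v₂ → C * a ≤ 1 := by
    intro a ha
    have := ha.trans (min_le_right _ _)
    rw [le_div_iff₀ hC] at this; linarith
  have low : ∀ a b, 0 ≤ b → b ≤ a → a ≤ v₂ → a * (a - b) ≤ S a - S b := by
    intro a b hb hba ha
    have h1 := (abs_le.1 (hS a b hb hba (ha.trans hvη))).1
    have h2 := hvC a ha
    have h3 : C * a ^ 2 * (a - b) ≤ a * (a - b) := by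
      have : 0 ≤ a * (a - b) := mul_nonneg (hb.trans hba) (by linarith)
      calc C * a ^ 2 * (a - b) = C * a * (a * (a - b)) := by ring
        _ ≤ 1 * (a * (a - b)) := by gcongr
        _ = _ := one_mul _
    have h4 : 2 * (a * (a - b)) ≤ 3 * π / 4 * (a ^ 2 - b ^ 2) := by
      have e : a * (a - b) ≤ a ^ 2 - b ^ 2 := by nlinarith
      have e0 : 0 ≤ a * (a - b) := mul_nonneg (hb.trans hba) (by linarith)
      calc 2 * (a * (a - b)) ≤ (3 * π / 4) * (a * (a - b)) := by
            gcongr; linarith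
        _ ≤ _ := by gcongr
    linarith
  have mono : StrictMonoOn S (Set.Icc 0 v₂) := by
    intro b hb a ha hba
    have := low a b hb.1 hba.le ha.2
    have : 0 < a * (a - b) := mul_pos (hb.1.trans_lt hba) (by linarith)
    linarith
  have lip : LipschitzOnWith (Real.toNNReal (3 * π / 4 * (2 * η) + C * η ^ 2)) S (Set.Icc 0 v₂) := by
    have base : ∀ a b, 0 ≤ b → b ≤ a → a ≤ v₂ →
        |S a - S b| ≤ (3 * π / 4 * (2 * η) + C * η ^ 2) * (a - b) := by
      intro a b hb hba ha
      have h1 := hS a b hb hba (ha.trans hvη)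
      have hab : 0 ≤ a - b := by linarith
      have ha0 := hb.trans hba
      have haη := ha.trans hvη
      have h2 : C * a ^ 2 * (a - b) ≤ C * η ^ 2 * (a - b) := by gcongr
      have h3 : |3 * π / 4 * (a ^ 2 - b ^ 2)| ≤ 3 * π / 4 * (2 * η) * (a - b) := by
        rw [abs_of_nonneg (mul_nonneg (by positivity) (by nlinarith))]
        have : a ^ 2 - b ^ 2 ≤ 2 * η * (a - b) := by nlinarith
        calc _ ≤ 3 * π / 4 * (2 * η * (a - b)) := by gcongr
          _ = _ := by ring
      have h4 := abs_add_le (S a - S b - 3 * π / 4 * (a ^ 2 - b ^ 2)) (3 * π / 4 * (a ^ 2 - b ^ 2))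
      rw [sub_add_cancel] at h4
      linarith
    apply LipschitzOnWith.of_dist_le_mul
    intro a ha b hb
    rw [Real.coe_toNNReal _ (by positivity), Real.dist_eq, Real.dist_eq]
    rcases le_total b a with h | h
    · rw [abs_of_nonneg (by linarith : 0 ≤ a - b)]
      exact base a b hb.1 h ha.2
    · rw [abs_sub_comm, abs_sub_comm a b, abs_of_nonneg (by linarith : 0 ≤ b - a)]
      exact base b a ha.1 h hb.2
  have hK : 0 < S (v₂ / 2) := by
    rw [← S0]
    exact mono ⟨le_rfl, hv0.le⟩ ⟨by positivity, by linarith⟩ (by positivity)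
  refine ⟨S (v₂ / 2), hK, v₂, hv0, hvη, ?_⟩
  intro s hs hsK
  have ivt := intermediate_value_Icc (by positivity : (0:ℝ) ≤ v₂ / 2)
    (lip.continuousOn.mono (Set.Icc_subset_Icc_right (by linarith)))
  obtain ⟨γ, hγ, hγs⟩ := ivt (show s ∈ Set.Icc (S 0) (S (v₂ / 2)) from ⟨by rw [S0]; exact hs.le, hsK⟩)
  have hγ0 : 0 < γ := by
    rcases hγ.1.eq_or_lt with h | h
    · subst h; rw [S0] at hγs; linarith
    · exact h
  have hγv : γ < v₂ := by have := hγ.2; linarith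
  have hγr : γ ≤ √s := by
    apply Real.le_sqrt_of_sq_le
    have := low γ 0 le_rfl hγ0.le hγv.le
    rw [S0, hγs] at this; nlinarith
  have hγ3 : γ ^ 3 ≤ √s ^ 3 := by gcongr
  have cub : ∀ u, 0 ≤ u → u ≤ 1 → |S (γ * u) - 3 * π / 4 * (γ * u) ^ 2| ≤ C * √s ^ 3 := by
    intro u hu hu1
    have hgu : γ * u ≤ γ := by nlinarith
    have := hS (γ * u) 0 le_rfl (by positivity) (by linarith)
    rw [S0] at this
    have e : S (γ * u) - 0 - 3 * π / 4 * ((γ * u) ^ 2 - 0 ^ 2)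
      = S (γ * u) - 3 * π / 4 * (γ * u) ^ 2 := by ring
    rw [e] at this
    refine this.trans ?_
    calc C * (γ * u) ^ 2 * (γ * u - 0) = C * (γ * u) ^ 3 := by ring
      _ ≤ C * √s ^ 3 := by gcongr; linarith
  have cub1 : |s - 3 * π / 4 * γ ^ 2| ≤ C * √s ^ 3 := by
    have := cub 1 zero_le_one le_rfl
    rwa [mul_one, hγs] at this
  refine ⟨γ, hγ0, hγv, hγs, ?_, hγr, ?_, ?_⟩
  · intro γ' h0 h1 h2
    exact mono.injOn ⟨h0.le, h1.le⟩ ⟨hγ0.le, hγv.le⟩ (h2.trans hγs.symm)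
  · have e : γ ^ 2 - 4 * s / (3 * π) = -(4 / (3 * π)) * (s - 3 * π / 4 * γ ^ 2) := by
      field_simp; ring
    rw [e, abs_mul, abs_neg, abs_of_pos (by positivity)]
    have : 4 / (3 * π) ≤ 1 := by rw [div_le_one (by positivity)]; linarith
    calc _ ≤ 1 * (C * √s ^ 3) := by gcongr
      _ = _ := one_mul _
  · intro u hu hu1
    have h1 := cub u hu hu1
    have e : S (γ * u) - s * u ^ 2 = (S (γ * u) - 3 * π / 4 * (γ * u) ^ 2)
      - u ^ 2 * (s - 3 * π / 4 * γ ^ 2) := by ring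
    rw [e]
    refine (abs_sub _ _).trans ?_
    rw [abs_mul, abs_of_nonneg (sq_nonneg u)]
    have : u ^ 2 * |s - 3 * π / 4 * γ ^ 2| ≤ 1 * (C * √s ^ 3) := by
      gcongr
      exact pow_le_one₀ hu hu1
    linarith

lemma f_data (f : ℝ → ℝ) (hf : ContDiff ℝ 5 f)
    (hO : ∀ i : ℕ, i ≤ 5 → (iteratedDeriv i f) =O[𝓝 0] fun x : ℝ => |x| ^ (5 - i)) :
    ∃ f1 f2 : ℝ → ℝ, ∃ M > (0:ℝ), ∃ d > (0:ℝ), f 0 = 0 ∧ (∀ x, HasDerivAt f (f1 x) x) ∧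
      (∀ x, HasDerivAt f1 (f2 x) x) ∧ ∀ x, |x| < d → |f x| ≤ M * |x| ^ 5 ∧
      |f1 x| ≤ M * |x| ^ 4 ∧ |f2 x| ≤ M * |x| ^ 3 := by
  obtain ⟨M0, -, h0⟩ := (hO 0 (by norm_num)).exists_pos
  obtain ⟨M1, -, h1⟩ := (hO 1 (by norm_num)).exists_pos
  obtain ⟨M2, -, h2⟩ := (hO 2 (by norm_num)).exists_pos
  have hev := (h0.bound.and (h1.bound.and h2.bound))
  obtain ⟨d, hd, hd'⟩ := Metric.eventually_nhds_iff.1 hev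
  have B : ∀ x, |x| < d → |f x| ≤ (max 1 (max M0 (max M1 M2))) * |x| ^ 5 ∧
      |deriv f x| ≤ (max 1 (max M0 (max M1 M2))) * |x| ^ 4 ∧
      |iteratedDeriv 2 f x| ≤ (max 1 (max M0 (max M1 M2))) * |x| ^ 3 := by
    intro x hx
    obtain ⟨a1, a2, a3⟩ := hd' (by simpa [Real.dist_eq] using hx : dist x 0 < d)
    simp only [iteratedDeriv_zero, iteratedDeriv_one, Real.norm_eq_abs, abs_pow, abs_abs] at a1 a2 a3
    refine ⟨a1.trans ?_, a2.trans ?_, a3.trans ?_⟩ <;> norm_num <;> gcongr <;> simp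
  refine ⟨deriv f, iteratedDeriv 2 f, max 1 (max M0 (max M1 M2)), by positivity, d, hd, ?_, ?_, ?_, B⟩
  · have := (B 0 (by simpa using hd)).1
    simpa using this
  · intro x
    exact (hf.differentiable (by norm_num) x).hasDerivAt
  · intro x
    have := (hf.differentiable_iteratedDeriv 1 (by norm_num) x).hasDerivAt
    rw [← iteratedDeriv_succ, iteratedDeriv_one] at this
    exact this

lemma period_expansion (V f : ℝ → ℝ) (l : ℝ) (hV : PerturbedQuartic V f l)
    (v₁ : ℝ) (hv₁ : 0 < v₁)
    (xm xM : ℝ → ℝ)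
    (hext : ∀ v : ℝ, 0 < |v| → |v| < v₁ → xm v ≤ 0 ∧ 0 ≤ xM v ∧
      V (xm v) = v ^ 2 / 2 ∧ V (xM v) = v ^ 2 / 2)
    (hnear_m : Filter.Tendsto xm (𝓝 0) (𝓝 0))
    (hnear_M : Filter.Tendsto xM (𝓝 0) (𝓝 0))
    (T : ℝ → ℝ) (hT0 : T 0 = 2 * Real.pi)
    (hT : ∀ v : ℝ, 0 < |v| → |v| < v₁ →
      T v = Real.sqrt 2 * ∫ x in (xm v)..(xM v), (Real.sqrt (v ^ 2 / 2 - V x))⁻¹) :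
    ∃ η > (0:ℝ), ∃ C > (0:ℝ), (∀ w, |w| < η → T w = T |w|) ∧
      ∀ a b, 0 ≤ b → b ≤ a → a ≤ η →
        |l * (2 * π - T a) - l * (2 * π - T b) - 3 * π / 4 * (a ^ 2 - b ^ 2)|
          ≤ C * a ^ 2 * (a - b) := by
  obtain ⟨hl, hf, hVe, hO⟩ := hV
  obtain ⟨f1, f2, M, hM, d, hd, f0, df, df1, B⟩ := f_data f hf hO
  have hl1 : |l| = 1 := by rcases hl with h | h <;> simp [h]
  have hl2 : l * l = 1 := by rcases hl with h | h <;> simp [h]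
  have V0 : V 0 = 0 := by simp [hVe, f0]
  have hpos : ∀ v : ℝ, 0 < |v| → |v| < v₁ → xm v < 0 ∧ 0 < xM v := by
    intro v h0 h
    obtain ⟨a1, a2, a3, a4⟩ := hext v h0 h
    have hv : 0 < v ^ 2 / 2 := by have := abs_pos.1 h0; positivity
    refine ⟨lt_of_le_of_ne a1 ?_, lt_of_le_of_ne a2 ?_⟩
    · intro h; rw [h, V0] at a3; linarith
    · intro h; rw [← h, V0] at a4; linarith
  obtain ⟨δp, hδp, ηp, hηp, Cp, hCp, gp, ep, cp, gp0, bp, ip, Ip⟩ :=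
    one_sided f f1 f2 l M d v₁ hl1 hM hd hv₁ (fun x _ _ => df x) (fun x _ _ => df1 x)
      (fun x h0 h => by simpa [abs_of_pos h0] using (B x (by rwa [abs_of_pos h0])).1)
      (fun x h0 h => by simpa [abs_of_pos h0] using (B x (by rwa [abs_of_pos h0])).2.1)
      (fun x h0 h => by simpa [abs_of_pos h0] using (B x (by rwa [abs_of_pos h0])).2.2)
      V hVe xM (fun v h0 h => ⟨(hpos v (by rwa [abs_of_pos h0]) (by rwa [abs_of_pos h0])).2,
        (hext v (by rwa [abs_of_pos h0]) (by rwa [abs_of_pos h0])).2.2.2⟩)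
      (hnear_M.mono_left nhdsWithin_le_nhds)
  have hn : ∀ x : ℝ, HasDerivAt (fun x : ℝ => -x) (-1) x := fun x => (hasDerivAt_id x).neg
  obtain ⟨δm, hδm, ηm, hηm, Cm, hCm, gm, em, cm, gm0, bm, im, Im⟩ :=
    one_sided (fun x => f (-x)) (fun x => - f1 (-x)) (fun x => f2 (-x)) l M d v₁ hl1 hM hd hv₁
      (fun x _ _ => ((df (-x)).comp x (hn x)).congr_deriv (by ring))
      (fun x _ _ => (((df1 (-x)).comp x (hn x)).neg).congr_deriv (by ring))
      (fun x h0 h => by simpa [abs_of_pos h0] using (B (-x) (by rwa [abs_neg, abs_of_pos h0])).1)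
      (fun x h0 h => by simpa [abs_of_pos h0] using (B (-x) (by rwa [abs_neg, abs_of_pos h0])).2.1)
      (fun x h0 h => by simpa [abs_of_pos h0] using (B (-x) (by rwa [abs_neg, abs_of_pos h0])).2.2)
      (fun x => V (-x)) (fun x => by simp only [hVe]; ring) (fun v => - xm v)
      (fun v h0 h => ⟨by
          have := (hpos v (by rwa [abs_of_pos h0]) (by rwa [abs_of_pos h0])).1
          linarith, by
          simpa using (hext v (by rwa [abs_of_pos h0]) (by rwa [abs_of_pos h0])).2.2.1⟩)
      (by simpa using (hnear_m.neg.mono_left nhdsWithin_le_nhds))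
  have hev : ∀ᶠ w in 𝓝 (0:ℝ), xM w < δp ∧ -xm w < δm := by
    refine (hnear_M.eventually_lt_const hδp).and ?_
    have := hnear_m.neg
    rw [neg_zero] at this
    exact this.eventually_lt_const hδm
  obtain ⟨ε, hε, hε'⟩ := Metric.eventually_nhds_iff.1 hev
  set η0 := min ε (min ηp ηm) with hη0
  have hη0p : 0 < η0 := by positivity
  have e1 : ∀ {w}, w < η0 → w < ε := fun h => h.trans_le (min_le_left _ _)
  have e2 : ∀ {w}, w < η0 → w < ηp := fun h =>
    h.trans_le ((min_le_right _ _).trans (min_le_left _ _))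
  have e3 : ∀ {w}, w < η0 → w < ηm := fun h =>
    h.trans_le ((min_le_right _ _).trans (min_le_right _ _))
  have pi0 := Real.pi_pos
  have sinp : ∀ θ ∈ Set.Icc 0 (π / 2), 0 ≤ sin θ := fun θ hθ =>
    sin_nonneg_of_nonneg_of_le_pi hθ.1 (by have := hθ.2; linarith)
  have ii : ∀ v, 0 ≤ v → v < η0 → ∀ g : ℝ → ℝ, ∀ η, η0 ≤ η → ContinuousOn g (Set.Icc 0 η) →
      IntervalIntegrable (fun θ => g (v * sin θ)) MeasureTheory.volume 0 (π / 2) := by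
    intro v h0 h g η hη hg
    apply ContinuousOn.intervalIntegrable
    rw [Set.uIcc_of_le (by positivity)]
    refine hg.comp (by fun_prop) ?_
    intro θ hθ
    have a1 := sinp θ hθ
    exact ⟨by positivity, by nlinarith [sin_le_one θ]⟩
  have ηp' : η0 ≤ ηp := (min_le_right _ _).trans (min_le_left _ _)
  have ηm' : η0 ≤ ηm := (min_le_right _ _).trans (min_le_right _ _)
  have formula : ∀ v, 0 ≤ v → v < η0 →
      T v = 2 * ∫ θ in (0:ℝ)..(π / 2), (gp (v * sin θ) + gm (v * sin θ)) := by
    intro v h0 h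
    rcases h0.eq_or_lt with h0 | h0
    · subst h0
      simp [gp0, gm0, hT0]
    · obtain ⟨Ip1, Ip2⟩ := Ip v h0 (e2 h)
      obtain ⟨Im1, Im2⟩ := Im v h0 (e3 h)
      have habs : |v| = v := abs_of_pos h0
      have Im1' : IntervalIntegrable (fun x => (√(v ^ 2 / 2 - V x))⁻¹) MeasureTheory.volume
          (xm v) 0 := by
        rw [IntervalIntegrable.iff_comp_neg, neg_zero]
        exact Im1.symm
      have Im2' : ∫ x in (xm v)..0, (√(v ^ 2 / 2 - V x))⁻¹
          = √2 * ∫ θ in (0:ℝ)..(π / 2), gm (v * sin θ) := by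
        rw [← Im2, intervalIntegral.integral_comp_neg (fun x => (√(v ^ 2 / 2 - V x))⁻¹)]
        simp
      rw [hT v (by rwa [habs]) (by rw [habs]; exact (e2 h).trans_le ep),
        ← intervalIntegral.integral_add_adjacent_intervals Im1' Ip1, Im2', Ip2,
        intervalIntegral.integral_add (ii v h0.le h gp ηp ((min_le_right _ _).trans (min_le_left _ _)) cp)
        (ii v h0.le h gm ηm ((min_le_right _ _).trans (min_le_right _ _)) cm)]
      have := Real.mul_self_sqrt (show (0:ℝ) ≤ 2 by norm_num)
      linear_combination ((∫ θ in (0:ℝ)..(π / 2), gm (v * sin θ)) +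
        ∫ θ in (0:ℝ)..(π / 2), gp (v * sin θ)) * this
  refine ⟨η0 / 2, by positivity, (Cp + Cm) * π, by positivity, ?_, ?_⟩
  · intro w hw
    have hw' : |w| < η0 := by linarith
    rcases eq_or_ne w 0 with h0 | h0
    · simp [h0]
    have h1 : 0 < |w| := abs_pos.2 h0
    have h2 : |w| < v₁ := (e2 hw').trans_le ep
    have h3 : 0 < |(|w|)| := by rwa [abs_abs]
    have h4 : |(|w|)| < v₁ := by rwa [abs_abs]
    obtain ⟨a1, a2⟩ := hpos w h1 h2
    obtain ⟨-, -, a3, a4⟩ := hext w h1 h2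
    obtain ⟨a5, a6⟩ := hε' (show dist w 0 < ε by rw [Real.dist_eq, sub_zero]; exact e1 hw')
    have q1 : xM w = xM |w| := ip _ h1 (e2 hw') _ a2 a5 (by rw [sq_abs]; exact a4)
    have q2 : -xm w = -xm |w| :=
      im _ h1 (e3 hw') (-xm w) (by linarith) a6 (by rw [sq_abs, neg_neg]; exact a3)
    rw [hT w h1 h2, hT |w| h3 h4, ← q1, ← neg_inj.1 q2, sq_abs]
  · intro a b hb hba ha
    have ha' : a < η0 := by linarith
    have hb' : b < η0 := by linarith
    have ha0 := hb.trans hba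
    have Ia := (ii a ha0 ha' gp ηp ηp' cp).add (ii a ha0 ha' gm ηm ηm' cm)
    have Ib := (ii b hb hb' gp ηp ηp' cp).add (ii b hb hb' gm ηm ηm' cm)
    have Is : IntervalIntegrable (fun θ => 3 / 2 * l * (a ^ 2 - b ^ 2) * sin θ ^ 2)
      MeasureTheory.volume 0 (π / 2) := by
      apply Continuous.intervalIntegrable; fun_prop
    have hI : ∫ θ in (0:ℝ)..(π / 2), (((gp (a * sin θ) + gm (a * sin θ)) -
        (gp (b * sin θ) + gm (b * sin θ))) + 3 / 2 * l * (a ^ 2 - b ^ 2) * sin θ ^ 2)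
        = (T a - T b) / 2 + 3 / 2 * l * (a ^ 2 - b ^ 2) * (π / 4) := by
      rw [intervalIntegral.integral_add (Ia.sub Ib) Is, intervalIntegral.integral_sub Ia Ib,
        intervalIntegral.integral_const_mul, integral_sin_sq, formula a ha0 ha', formula b hb hb']
      simp only [sin_zero, cos_zero, sin_pi_div_two, cos_pi_div_two]
      ring
    have e : l * (2 * π - T a) - l * (2 * π - T b) - 3 * π / 4 * (a ^ 2 - b ^ 2)
        = - 2 * l * ((T a - T b) / 2 + 3 / 2 * l * (a ^ 2 - b ^ 2) * (π / 4)) := by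
      linear_combination (3 * π / 4 * (a ^ 2 - b ^ 2)) * hl2
    rw [e, ← hI, abs_mul, abs_mul, hl1, ← Real.norm_eq_abs (intervalIntegral _ _ _ _)]
    have hab : 0 ≤ a - b := by linarith
    have bound := intervalIntegral.norm_integral_le_of_norm_le_const (a := 0) (b := π / 2)
      (f := fun θ => (((gp (a * sin θ) + gm (a * sin θ)) -
        (gp (b * sin θ) + gm (b * sin θ))) + 3 / 2 * l * (a ^ 2 - b ^ 2) * sin θ ^ 2))
      (C := (Cp + Cm) * a ^ 2 * (a - b)) (by
        intro θ hθ
        rw [Set.uIoc_of_le (by positivity)] at hθ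
        have s0 := sinp θ ⟨hθ.1.le, hθ.2⟩
        have s1 := sin_le_one θ
        have k1 : a * sin θ ≤ a := by nlinarith
        have k0 : b * sin θ ≤ a * sin θ := by gcongr
        have k2 : a * sin θ - b * sin θ ≤ a - b := by nlinarith
        have k3 : 0 ≤ b * sin θ := by positivity
        have k4 : 0 ≤ a * sin θ := by positivity
        have m1 := bp (a * sin θ) (b * sin θ) k3 k0 (by linarith)
        have m2 := bm (a * sin θ) (b * sin θ) k3 k0 (by linarith)
        have m3 : (a * sin θ) ^ 2 * (a * sin θ - b * sin θ) ≤ a ^ 2 * (a - b) := by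
          gcongr
        have m4 : Cp * ((a * sin θ) ^ 2 * (a * sin θ - b * sin θ)) ≤ Cp * (a ^ 2 * (a - b)) := by
          gcongr
        have m5 : Cm * ((a * sin θ) ^ 2 * (a * sin θ - b * sin θ)) ≤ Cm * (a ^ 2 * (a - b)) := by
          gcongr
        have ee : (((gp (a * sin θ) + gm (a * sin θ)) -
            (gp (b * sin θ) + gm (b * sin θ))) + 3 / 2 * l * (a ^ 2 - b ^ 2) * sin θ ^ 2)
            = (gp (a * sin θ) - gp (b * sin θ) + 3 / 4 * l * ((a * sin θ) ^ 2 - (b * sin θ) ^ 2))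
            + (gm (a * sin θ) - gm (b * sin θ)
              + 3 / 4 * l * ((a * sin θ) ^ 2 - (b * sin θ) ^ 2)) := by ring
        rw [ee, Real.norm_eq_abs]
        refine (abs_add_le _ _).trans ?_
        linarith)
    rw [sub_zero, abs_of_pos (by positivity : 0 < π / 2)] at bound
    have h22 : |(-2:ℝ)| = 2 := by norm_num
    rw [h22]
    linarith

/-- the `(n,t)`-scaling velocity `γ_{n,t} > 0` defined by
`T(γ_{n,t}) = 2π - 2ℓt/n` is well defined for `t ∈ (0, Kn]`, with
`|γ_{n,t}² - 8t/(3πn)| ≤ C(t/n)^{3/2}` (so `γ_{n,t} = O((t/n)^{1/2})`) and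
`|(n/2)T(γ_{n,t}v) - (nπ - ℓt + ℓt(1-v²))| ≤ C t^{3/2}/n^{1/2}` for `v ∈ [-1,1]`. -/
theorem statement16 (V f : ℝ → ℝ) (l : ℝ) (hV : PerturbedQuartic V f l)
    (v₁ : ℝ) (hv₁ : 0 < v₁)
    -- the extreme points `x^m(v) ≤ 0 ≤ x^M(v)`, determined near 0 by
    -- `V(x^m(v)) = V(x^M(v)) = v²/2`:
    (xm xM : ℝ → ℝ)
    (hext : ∀ v : ℝ, 0 < |v| → |v| < v₁ → xm v ≤ 0 ∧ 0 ≤ xM v ∧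
      V (xm v) = v ^ 2 / 2 ∧ V (xM v) = v ^ 2 / 2)
    (hnear_m : Filter.Tendsto xm (𝓝 0) (𝓝 0))
    (hnear_M : Filter.Tendsto xM (𝓝 0) (𝓝 0))
    -- the period map `T(v) = √2 ∫_{x^m(v)}^{x^M(v)} (v²/2 - V(x))^{-1/2} dx`, `T(0) = 2π`:
    (T : ℝ → ℝ) (hT0 : T 0 = 2 * Real.pi)
    (hT : ∀ v : ℝ, 0 < |v| → |v| < v₁ →
      T v = Real.sqrt 2 * ∫ x in (xm v)..(xM v), (Real.sqrt (v ^ 2 / 2 - V x))⁻¹) :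
    ∃ K > (0 : ℝ), ∃ C > (0 : ℝ), ∃ v₂ > (0 : ℝ),
      ∀ n : ℕ, 1 ≤ n → ∀ t : ℝ, 0 < t → t ≤ K * (n : ℝ) →
        ∃ γ : ℝ, 0 < γ ∧ γ < v₂ ∧
          -- (i) well defined:
          T γ = 2 * Real.pi - 2 * l * t / (n : ℝ) ∧
          (∀ γ' : ℝ, 0 < γ' → γ' < v₂ → T γ' = 2 * Real.pi - 2 * l * t / (n : ℝ) → γ' = γ) ∧
          -- (ii):
          |γ ^ 2 - 8 * t / (3 * Real.pi * (n : ℝ))| ≤ C * (t / (n : ℝ)) ^ ((3 : ℝ) / 2) ∧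
          γ ≤ C * Real.sqrt (t / (n : ℝ)) ∧
          -- (iii):
          (∀ v ∈ Set.Icc (-1 : ℝ) 1,
            |(n : ℝ) / 2 * T (γ * v) - ((n : ℝ) * Real.pi - l * t + l * t * (1 - v ^ 2))|
              ≤ C * t ^ ((3 : ℝ) / 2) / Real.sqrt (n : ℝ)) := by
  obtain ⟨η, hη, C, hC, hTe, hS⟩ := period_expansion V f l hV v₁ hv₁ xm xM hext hnear_m hnear_M T hT0 hT
  have hl := hV.1
  have hl1 : |l| = 1 := by rcases hl with h | h <;> simp [h]
  have hl2 : l * l = 1 := by rcases hl with h | h <;> simp [h]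
  obtain ⟨K, hK, v₂, hv₂, hvη, H⟩ := scaling (fun v => l * (2 * π - T v)) η C hη hC
    (by simp [hT0]) hS
  refine ⟨K / 2, by positivity, 4 * C + 2, by positivity, v₂, hv₂, ?_⟩
  intro n hn t ht htK
  have hn0 : (0:ℝ) < n := by exact_mod_cast hn
  have hs : 0 < 2 * t / n := by positivity
  obtain ⟨γ, g0, gv, gs, gu, gr, g2, g3⟩ := H (2 * t / n) hs (by
    rw [div_le_iff₀ hn0]; linarith)
  have eqv : ∀ w, T w = 2 * π - 2 * l * t / n ↔ l * (2 * π - T w) = 2 * t / n := by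
    intro w
    constructor
    · intro h
      rw [h]; linear_combination (2 * t / n) * hl2
    · intro h
      linear_combination (2 * π - T w) * hl2 - l * h
  have hq0 : 0 < t / n := by positivity
  have r2 : √(2 * t / n) ≤ 3 / 2 * √(t / n) := by
    rw [Real.sqrt_le_left (by positivity), mul_pow, Real.sq_sqrt hq0.le]
    have : 2 * t / n = 2 * (t / n) := by ring
    linarith
  have hpow : ∀ y : ℝ, 0 ≤ y → y ^ ((3:ℝ) / 2) = √y ^ 3 := by
    intro y hy
    rw [Real.sqrt_eq_rpow, ← Real.rpow_natCast, ← Real.rpow_mul hy]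
    norm_num
  have r3 : √(2 * t / n) ^ 3 ≤ 4 * √(t / n) ^ 3 := by
    calc _ ≤ (3 / 2 * √(t / n)) ^ 3 := by gcongr
      _ = 27 / 8 * √(t / n) ^ 3 := by ring
      _ ≤ _ := by gcongr; norm_num
  have hR : 0 ≤ √(t / n) ^ 3 := by positivity
  refine ⟨γ, g0, gv, (eqv γ).2 gs, fun γ' h0 h1 h2 => gu γ' h0 h1 ((eqv γ').1 h2), ?_, ?_, ?_⟩
  · rw [hpow _ hq0.le]
    have e : 4 * (2 * t / n) / (3 * π) = 8 * t / (3 * π * n) := by field_simp; ring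
    rw [← e]
    refine g2.trans ?_
    calc C * √(2 * t / n) ^ 3 ≤ C * (4 * √(t / n) ^ 3) := by gcongr
      _ ≤ _ := by linarith
  · have : 0 ≤ √(t / n) := by positivity
    have h4 : 0 ≤ C * √(t / n) := by positivity
    linarith
  · intro v hv
    have hva : |v| ≤ 1 := abs_le.2 hv
    have h1 := g3 |v| (abs_nonneg v) hva
    have e0 : |γ * v| = γ * |v| := by rw [abs_mul, abs_of_pos g0]
    have e1 : T (γ * v) = T (γ * |v|) := by
      rw [← e0]
      apply hTe
      rw [e0]
      nlinarith
    have e2 : (n:ℝ) / 2 * T (γ * v) - (n * π - l * t + l * t * (1 - v ^ 2))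
        = -l * (n / 2) * (l * (2 * π - T (γ * |v|)) - 2 * t / n * |v| ^ 2) := by
      rw [e1, sq_abs]
      have : (n:ℝ) * (2 * t / n) = 2 * t := by field_simp
      linear_combination (-(n:ℝ) / 2 * (T (γ * |v|) - 2 * π)) * hl2 - (l * v ^ 2 / 2) * this
    have e3 : C * t ^ ((3:ℝ) / 2) / √n = C * (n * √(t / n) ^ 3) := by
      rw [hpow _ ht.le, Real.sqrt_div ht.le]
      have hsn : 0 < √(n:ℝ) := by positivity
      have := Real.sq_sqrt hn0.le
      field_simp
      linear_combination this
    have e3' : (4 * C + 2) * t ^ ((3:ℝ) / 2) / √n = (4 * C + 2) * (n * √(t / n) ^ 3) := by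
      have : (4 * C + 2) * t ^ ((3:ℝ) / 2) / √n = (4 * C + 2) / C * (C * t ^ ((3:ℝ) / 2) / √n) := by
        field_simp
      rw [this, e3]; field_simp
    rw [e2, e3', abs_mul, abs_mul, abs_neg, hl1, abs_of_pos (by positivity : (0:ℝ) < n / 2)]
    calc 1 * ((n:ℝ) / 2) * _ ≤ 1 * ((n:ℝ) / 2) * (2 * C * √(2 * t / n) ^ 3) := by gcongr
      _ ≤ 1 * ((n:ℝ) / 2) * (2 * C * (4 * √(t / n) ^ 3)) := by gcongr
      _ = 4 * C * (n * √(t / n) ^ 3) := by ring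
      _ ≤ _ := by
        have : 0 ≤ n * √(t / n) ^ 3 := by positivity
        linarith
end

section
/- Let V be a C⁵ perturbed quartic potential with ℓ ∈ {−1,1} equal to the sign of V⁽⁴⁾(0), let T(v) be its period map, and let Γ_{n,t} = (8t/(3πn))^{1/2}. There exist K > 0 and C > 0 such that for every integer n ≥ 1, every t ∈ (0, Kn] and every v ∈ [−1,1]: |(n/2)·T(Γ_{n,t} v) − ℓt(1 − v²) − (nπ − ℓt)| ≤ C t^{3/2}/n^{1/2}. -/
open Real Filter Asymptotics Topology

set_option maxHeartbeats 1000000 in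
lemma pt_bound (l M x f f' : ℝ) (hl : l = 1 ∨ l = -1) (hM : 1 ≤ M) (hx : 0 < x)
    (hMx : M * x ≤ 1 / 100) (hf : |f| ≤ M * x ^ 5) (hf' : |f'| ≤ M * x ^ 4) :
    x ^ 2 / 4 ≤ x ^ 2 + l * x ^ 4 / 2 + 2 * f ∧ x / 2 ≤ x + l * x ^ 3 + f' ∧
    |√(x ^ 2 + l * x ^ 4 / 2 + 2 * f) - (1 - 3 * l * (x ^ 2 + l * x ^ 4 / 2 + 2 * f) / 4)
      * (x + l * x ^ 3 + f')| ≤ 100 * M * x ^ 4 := by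
  have hx1 : x ≤ 1 / 100 := by nlinarith
  have hl2 : l ^ 2 = 1 := by rcases hl with h | h <;> rw [h] <;> norm_num
  have hlabs : |l| = 1 := by rcases hl with h | h <;> rw [h] <;> norm_num
  have hl1 : -1 ≤ l := by rcases hl with h | h <;> rw [h] <;> norm_num
  have hl1' : l ≤ 1 := by rcases hl with h | h <;> rw [h] <;> norm_num
  have p2 : 0 < x ^ 2 := by positivity
  have p3 : 0 < x ^ 3 := by positivity
  have p4 : 0 < x ^ 4 := by positivity
  have p5 : 0 < x ^ 5 := by positivity
  have p6 : 0 < x ^ 6 := by positivity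
  have h2 : x ^ 2 ≤ 1/100 * x := by nlinarith
  have h3 : x ^ 3 ≤ 1/100 * x ^ 2 := by nlinarith
  have h4 : x ^ 4 ≤ 1/100 * x ^ 3 := by nlinarith
  have h5 : x ^ 5 ≤ 1/100 * x ^ 4 := by nlinarith
  have h6 : x ^ 6 ≤ 1/100 * x ^ 5 := by nlinarith
  have h7 : x ^ 7 ≤ 1/100 * x ^ 6 := by nlinarith
  have hM4 : x ^ 4 ≤ M * x ^ 4 := by nlinarith
  have hM5 : x ^ 5 ≤ M * x ^ 5 := by nlinarith
  have hMf : M * x ^ 5 ≤ 1/100 * x ^ 4 := by nlinarith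
  have hMf' : M * x ^ 4 ≤ 1/100 * x ^ 3 := by nlinarith
  obtain ⟨f1, f2⟩ := abs_le.1 hf
  obtain ⟨g1, g2⟩ := abs_le.1 hf'
  have k3 : -x^3 ≤ l * x ^ 3 := by nlinarith
  have k3' : l * x ^ 3 ≤ x ^ 3 := by nlinarith
  have k4 : -x^4 ≤ l * x ^ 4 := by nlinarith
  have k4' : l * x ^ 4 ≤ x ^ 4 := by nlinarith
  have hW : x ^ 2 / 4 ≤ x ^ 2 + l * x ^ 4 / 2 + 2 * f := by linarith
  refine ⟨hW, by linarith, ?_⟩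
  set W := x ^ 2 + l * x ^ 4 / 2 + 2 * f with hWdef
  have hs2 : √W ^ 2 = W := Real.sq_sqrt (by linarith)
  have hs : x / 2 ≤ √W := Real.le_sqrt_of_sq_le (by nlinarith)
  have hA : |√W - (x + l * x ^ 3 / 4)| ≤ 5 * M * x ^ 4 := by
    have e : (√W - (x + l * x ^ 3 / 4)) * (√W + (x + l * x ^ 3 / 4)) = 2 * f - x ^ 6 / 16 := by
      have : (√W - (x + l * x ^ 3 / 4)) * (√W + (x + l * x ^ 3 / 4))
        = √W ^ 2 - (x + l * x ^ 3 / 4) ^ 2 := by ring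
      rw [this, hs2, hWdef]
      linear_combination (-(x^6/16)) * hl2
    have hp : x ≤ √W + (x + l * x ^ 3 / 4) := by linarith
    have e2 : |√W - (x + l * x ^ 3 / 4)| * (√W + (x + l * x ^ 3 / 4)) = |2 * f - x ^ 6 / 16| := by
      rw [← e, abs_mul, abs_of_pos (by linarith : 0 < √W + (x + l * x ^ 3 / 4))]
    have e3 : |2 * f - x ^ 6 / 16| ≤ 5 * M * x ^ 5 := by
      rw [abs_le]; constructor <;> linarith
    have e4 : |√W - (x + l * x ^ 3 / 4)| * x ≤ 5 * M * x ^ 4 * x := by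
      have := mul_le_mul_of_nonneg_left hp (abs_nonneg (√W - (x + l * x ^ 3 / 4)))
      linarith
    exact le_of_mul_le_mul_right e4 hx
  have hB : |(1 - 3 * l * W / 4) * (x + l * x ^ 3 + f') - (x + l * x ^ 3 / 4)| ≤ 50 * M * x ^ 4 := by
    have e : (1 - 3 * l * W / 4) * (x + l * x ^ 3 + f') - (x + l * x ^ 3 / 4)
      = (1 - 3 * l * W / 4) * f' - 3 / 4 * l * (x * (W - x^2) + W * (l * x ^ 3)) := by
      ring
    have w1 : |W - x ^ 2| ≤ x ^ 4 := by
      rw [abs_le]; constructor <;> linarith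
    have w2 : |W| ≤ 2 * x ^ 2 := by rw [abs_le]; constructor <;> linarith
    have w3 : |1 - 3 * l * W / 4| ≤ 2 := by
      have : |3 * l * W / 4| ≤ 1 := by
        rw [show 3 * l * W / 4 = 3/4 * (l * W) by ring, abs_mul, abs_mul, hlabs]
        rw [abs_of_pos (by norm_num : (0:ℝ) < 3/4)]
        linarith
      obtain ⟨a, b⟩ := abs_le.1 this
      rw [abs_le]; constructor <;> linarith
    have t1 : |(1 - 3 * l * W / 4) * f'| ≤ 2 * (M * x ^ 4) := by
      rw [abs_mul]; exact mul_le_mul w3 hf' (abs_nonneg _) (by norm_num)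
    have t2 : |x * (W - x^2)| ≤ x ^ 5 := by
      rw [abs_mul, abs_of_pos hx]
      calc x * |W - x ^ 2| ≤ x * x ^ 4 := by gcongr
        _ = x ^ 5 := by ring
    have t3 : |W * (l * x ^ 3)| ≤ 2 * x ^ 5 := by
      rw [abs_mul, abs_mul, hlabs, abs_of_pos p3]
      calc |W| * (1 * x ^ 3) ≤ 2 * x ^ 2 * (1 * x ^ 3) := by gcongr
        _ = 2 * x ^ 5 := by ring
    have t4 : |3 / 4 * l * (x * (W - x^2) + W * (l * x ^ 3))| ≤ 3 * x ^ 5 := by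
      rw [abs_mul, abs_mul, hlabs, abs_of_pos (by norm_num : (0:ℝ) < 3/4)]
      have := abs_add_le (x * (W - x^2)) (W * (l * x ^ 3))
      linarith
    rw [e]
    have := abs_sub ((1 - 3 * l * W / 4) * f') (3 / 4 * l * (x * (W - x^2) + W * (l * x ^ 3)))
    linarith
  obtain ⟨a1, a2⟩ := abs_le.1 hA
  obtain ⟨b1, b2⟩ := abs_le.1 hB
  have : 0 < M * x ^ 4 := by positivity
  rw [abs_le]; constructor <;> linarith

set_option maxHeartbeats 1000000 in
lemma half (l M r : ℝ) (f : ℝ → ℝ) (hl : l = 1 ∨ l = -1) (hM : 1 ≤ M)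
    (hMr : M * r ≤ 1 / 100) (hfd : Differentiable ℝ f)
    (hf : ∀ x, 0 ≤ x → x ≤ r → |f x| ≤ M * x ^ 5)
    (hf' : ∀ x, 0 ≤ x → x ≤ r → |deriv f x| ≤ M * x ^ 4)
    (v a : ℝ) (hv : 0 < v) (hv1 : v ≤ 1) (ha : 0 ≤ a) (har : a ≤ r)
    (hav : a ^ 2 + l * a ^ 4 / 2 + 2 * f a = v ^ 2) :
    IntervalIntegrable (fun x => (√(v ^ 2 - (x ^ 2 + l * x ^ 4 / 2 + 2 * f x)))⁻¹)
      MeasureTheory.volume 0 a ∧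
    |(∫ x in (0:ℝ)..a, (√(v ^ 2 - (x ^ 2 + l * x ^ 4 / 2 + 2 * f x)))⁻¹)
      - (π / 2 - 3 * π * l * v ^ 2 / 16)| ≤ 3200 * M * v ^ 3 := by
  have hlabs : |l| = 1 := by rcases hl with h | h <;> rw [h] <;> norm_num
  have hl1 : -1 ≤ l := by rcases hl with h | h <;> rw [h] <;> norm_num
  have hl1' : l ≤ 1 := by rcases hl with h | h <;> rw [h] <;> norm_num
  have hr : 0 ≤ r := ha.trans har
  have hf0 : f 0 = 0 := by have := hf 0 le_rfl hr; simpa using this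
  have ha0 : 0 < a := by
    rcases ha.lt_or_eq with h | h
    · exact h
    · rw [← h] at hav; simp [hf0] at hav; exact absurd hav.symm (by positivity)
  set W : ℝ → ℝ := fun x => x ^ 2 + l * x ^ 4 / 2 + 2 * f x with hW
  set D : ℝ → ℝ := fun x => x + l * x ^ 3 + deriv f x with hD
  have hWd : ∀ x, HasDerivAt W (2 * D x) x := by
    intro x
    have := (((hasDerivAt_id x).pow 2).add ((((hasDerivAt_id x).pow 4).const_mul l).div_const 2)).add
      ((hfd x).hasDerivAt.const_mul 2)
    have h2 : HasDerivAt W _ x := this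
    refine h2.congr_deriv ?_
    simp [hD]; ring
  have hWc : Continuous W := continuous_iff_continuousAt.2 fun x => (hWd x).continuousAt
  have hpt : ∀ x, 0 < x → x ≤ a → x ^ 2 / 4 ≤ W x ∧ x / 2 ≤ D x ∧
      |√(W x) - (1 - 3 * l * W x / 4) * D x| ≤ 100 * M * x ^ 4 := by
    intro x hx hxa
    exact pt_bound l M x (f x) (deriv f x) hl hM hx (by nlinarith) (hf x hx.le (by linarith))
      (hf' x hx.le (by linarith))
  have hmono : StrictMonoOn W (Set.Icc 0 a) := by
    apply strictMonoOn_of_deriv_pos (convex_Icc 0 a) hWc.continuousOn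
    intro x hx
    rw [interior_Icc] at hx
    rw [(hWd x).deriv]
    have := (hpt x hx.1 hx.2.le).2.1
    linarith [hx.1]
  have hWa : W a = v ^ 2 := hav
  have hW0 : W 0 = 0 := by simp [hW, hf0]
  have hWlt : ∀ x, 0 < x → x < a → W x < v ^ 2 := by
    intro x hx hxa
    rw [← hWa]; exact hmono ⟨hx.le, hxa.le⟩ ⟨ha, le_rfl⟩ hxa
  have hWpos : ∀ x, 0 < x → x ≤ a → 0 < W x := by
    intro x hx hxa; have := (hpt x hx hxa).1; have : 0 < x ^ 2 := by positivity
    linarith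
  have hav2 : a ≤ 2 * v := by
    have := (hpt a ha0 le_rfl).1
    rw [hWa] at this
    nlinarith
  -- G
  set G : ℝ → ℝ := fun x => arcsin (√(W x) / v) with hG
  set G' : ℝ → ℝ := fun x => D x / (√(W x) * √(v ^ 2 - W x)) with hG'
  set H : ℝ → ℝ := fun x => √(W x) * √(v ^ 2 - W x) with hH
  have hsd : ∀ x, 0 < x → x < a → HasDerivAt (fun x => √(W x)) (D x / √(W x)) x := by
    intro x hx hxa
    have := (hWd x).sqrt (hWpos x hx hxa.le).ne'
    refine this.congr_deriv ?_
    field_simp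
  have hvW : ∀ x, 0 < x → x < a → √(1 - (√(W x) / v) ^ 2) = √(v ^ 2 - W x) / v := by
    intro x hx hxa
    rw [div_pow, Real.sq_sqrt (hWpos x hx hxa.le).le]
    rw [show 1 - W x / v ^ 2 = (v ^ 2 - W x) / v ^ 2 by field_simp]
    rw [Real.sqrt_div' _ (by positivity), Real.sqrt_sq hv.le]
  have hGd : ∀ x ∈ Set.Ioo 0 a, HasDerivAt G (G' x) x := by
    rintro x ⟨hx, hxa⟩
    have h1 := (hsd x hx hxa).div_const v
    have hlt : √(W x) / v < 1 := by
      rw [div_lt_one hv]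
      exact (Real.sqrt_lt' hv).2 (hWlt x hx hxa)
    have hge : 0 ≤ √(W x) / v := by positivity
    have h2 := (Real.hasDerivAt_arcsin (x := √(W x) / v) (by linarith) (by linarith)).comp x h1
    refine HasDerivAt.congr_deriv (show HasDerivAt G _ x from h2) ?_
    rw [hvW x hx hxa]
    have : 0 < √(v ^ 2 - W x) := Real.sqrt_pos.2 (by linarith [hWlt x hx hxa])
    have : 0 < √(W x) := Real.sqrt_pos.2 (hWpos x hx hxa.le)
    simp only [hG']
    field_simp
  have hHd : ∀ x ∈ Set.Ioo 0 a, HasDerivAt H ((v ^ 2 - 2 * W x) * G' x) x := by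
    rintro x ⟨hx, hxa⟩
    have h1 := hsd x hx hxa
    have h2 : HasDerivAt (fun x => √(v ^ 2 - W x)) (-(2 * D x) / (2 * √(v ^ 2 - W x))) x :=
      ((hWd x).const_sub (v ^ 2)).sqrt (by linarith [hWlt x hx hxa])
    refine HasDerivAt.congr_deriv (show HasDerivAt H _ x from h1.mul h2) ?_
    have p1 : 0 < √(v ^ 2 - W x) := Real.sqrt_pos.2 (by linarith [hWlt x hx hxa])
    have p2 : 0 < √(W x) := Real.sqrt_pos.2 (hWpos x hx hxa.le)
    have q1 : √(v ^ 2 - W x) ^ 2 = v ^ 2 - W x := Real.sq_sqrt (by linarith [hWlt x hx hxa])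
    have q2 : √(W x) ^ 2 = W x := Real.sq_sqrt (hWpos x hx hxa.le).le
    simp only [hG']
    field_simp
    rw [q1, q2]; ring
  have hG'pos : ∀ x ∈ Set.Ioo 0 a, 0 ≤ G' x := by
    rintro x ⟨hx, hxa⟩
    have := (hpt x hx hxa.le).2.1
    have : 0 ≤ D x := by linarith
    simp only [hG']; positivity
  have hGc : Continuous G := by
    simp only [hG]; exact continuous_arcsin.comp (hWc.sqrt.div_const v)
  have hHc : Continuous H := by
    simp only [hH]; exact hWc.sqrt.mul (continuous_const.sub hWc).sqrt
  have hGint : IntervalIntegrable G' MeasureTheory.volume 0 a := by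
    apply intervalIntegral.intervalIntegrable_deriv_of_nonneg hGc.continuousOn (g := G)
    · simpa [ha] using hGd
    · simpa [ha] using hG'pos
  have hGI : ∫ x in (0:ℝ)..a, G' x = π / 2 := by
    rw [intervalIntegral.integral_eq_sub_of_hasDerivAt_of_le ha hGc.continuousOn hGd hGint]
    simp [hG, hW0, hWa, Real.sqrt_sq hv.le, hv.ne']
  have hHint : IntervalIntegrable (fun x => (v ^ 2 - 2 * W x) * G' x) MeasureTheory.volume 0 a :=
    hGint.continuousOn_mul (continuous_const.sub (continuous_const.mul hWc)).continuousOn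
  have hHI : ∫ x in (0:ℝ)..a, (v ^ 2 - 2 * W x) * G' x = 0 := by
    rw [intervalIntegral.integral_eq_sub_of_hasDerivAt_of_le ha hHc.continuousOn hHd hHint]
    simp [hH, hW0, hWa]
  set P : ℝ → ℝ := fun x => (1 - 3 * l * v ^ 2 / 8) * G' x + (3 * l / 8) * ((v ^ 2 - 2 * W x) * G' x) with hP
  have hPint : IntervalIntegrable P MeasureTheory.volume 0 a :=
    (hGint.const_mul _).add (hHint.const_mul _)
  have hPI : ∫ x in (0:ℝ)..a, P x = π / 2 - 3 * π * l * v ^ 2 / 16 := by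
    simp only [hP]
    rw [intervalIntegral.integral_add (hGint.const_mul _) (hHint.const_mul _),
      intervalIntegral.integral_const_mul, intervalIntegral.integral_const_mul, hGI, hHI]
    ring
  have hdiff : ∀ x ∈ Set.Ioo 0 a, |(√(v ^ 2 - W x))⁻¹ - P x| ≤ 1600 * M * v ^ 3 * G' x := by
    rintro x ⟨hx, hxa⟩
    obtain ⟨-, b2, b3⟩ := hpt x hx hxa.le
    have p1 : 0 < √(v ^ 2 - W x) := Real.sqrt_pos.2 (by linarith [hWlt x hx hxa])
    have p2 : 0 < √(W x) := Real.sqrt_pos.2 (hWpos x hx hxa.le)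
    have e : (√(v ^ 2 - W x))⁻¹ - P x =
        (√(W x) - (1 - 3 * l * W x / 4) * D x) / (√(W x) * √(v ^ 2 - W x)) := by
      simp only [hP, hG']
      field_simp
      ring
    rw [e, abs_div, abs_of_pos (mul_pos p2 p1)]
    simp only [hG']
    rw [← mul_div_assoc]
    apply div_le_div_of_nonneg_right _ (mul_pos p2 p1).le
    have hx3 : x ^ 3 ≤ (2 * v) ^ 3 := pow_le_pow_left₀ hx.le (by linarith) 3
    calc _ ≤ 100 * M * x ^ 4 := b3
      _ = 200 * M * x ^ 3 * (x / 2) := by ring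
      _ ≤ 200 * M * (2 * v) ^ 3 * D x := by gcongr
      _ = _ := by ring
  have hbint : IntervalIntegrable (fun x => 1600 * M * v ^ 3 * G' x) MeasureTheory.volume 0 a :=
    hGint.const_mul _
  have hmeas : Measurable (fun x => (√(v ^ 2 - W x))⁻¹) :=
    ((continuous_const.sub hWc).sqrt.measurable).inv
  have hae : ∀ᵐ x ∂(MeasureTheory.volume.restrict (Set.Ioc 0 a)), x ∈ Set.Ioo 0 a := by
    rw [← MeasureTheory.Measure.restrict_congr_set MeasureTheory.Ioo_ae_eq_Ioc]
    exact MeasureTheory.ae_restrict_mem measurableSet_Ioo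
  have hdint : IntervalIntegrable (fun x => (√(v ^ 2 - W x))⁻¹ - P x) MeasureTheory.volume 0 a := by
    rw [intervalIntegrable_iff_integrableOn_Ioc_of_le ha] at hbint hPint ⊢
    refine MeasureTheory.Integrable.mono' hbint (hmeas.aestronglyMeasurable.sub hPint.1) ?_
    filter_upwards [hae] with x hx using hdiff x hx
  have hIint : IntervalIntegrable (fun x => (√(v ^ 2 - W x))⁻¹) MeasureTheory.volume 0 a := by
    have := hdint.add hPint
    simpa using this
  refine ⟨hIint, ?_⟩
  rw [← hPI, ← intervalIntegral.integral_sub hIint hPint]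
  have h1 : ‖∫ x in (0:ℝ)..a, ((√(v ^ 2 - W x))⁻¹ - P x)‖ ≤ ∫ x in (0:ℝ)..a, 1600 * M * v ^ 3 * G' x := by
    apply intervalIntegral.norm_integral_le_of_norm_le ha _ hbint
    rw [← MeasureTheory.ae_restrict_iff' measurableSet_Ioc]
    filter_upwards [hae] with x hx using hdiff x hx
  rw [intervalIntegral.integral_const_mul, hGI] at h1
  have hpi : π / 2 ≤ 2 := by linarith [Real.pi_le_four]
  have : 1600 * M * v ^ 3 * (π / 2) ≤ 1600 * M * v ^ 3 * 2 := by gcongr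
  rw [Real.norm_eq_abs] at h1
  linarith

lemma period_bound (V f : ℝ → ℝ) (l : ℝ) (hV : PerturbedQuartic V f l)
    (v₁ : ℝ) (hv₁ : 0 < v₁) (xm xM : ℝ → ℝ)
    (hext : ∀ v : ℝ, 0 < |v| → |v| < v₁ → xm v ≤ 0 ∧ 0 ≤ xM v ∧
      V (xm v) = v ^ 2 / 2 ∧ V (xM v) = v ^ 2 / 2)
    (hnear_m : Filter.Tendsto xm (𝓝 0) (𝓝 0))
    (hnear_M : Filter.Tendsto xM (𝓝 0) (𝓝 0))
    (T : ℝ → ℝ) (hT0 : T 0 = 2 * Real.pi)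
    (hT : ∀ v : ℝ, 0 < |v| → |v| < v₁ →
      T v = Real.sqrt 2 * ∫ x in (xm v)..(xM v), (Real.sqrt (v ^ 2 / 2 - V x))⁻¹) :
    ∃ d > (0 : ℝ), ∃ C > (0 : ℝ), ∀ v : ℝ, |v| < d →
      |T v - (2 * π - 3 * π / 4 * l * v ^ 2)| ≤ C * |v| ^ 3 := by
  obtain ⟨hl, hfC, hVe, hO⟩ := hV
  have hfd : Differentiable ℝ f := hfC.differentiable (by norm_num)
  have h0 := hO 0 (by norm_num)
  have h1 := hO 1 (by norm_num)
  rw [iteratedDeriv_zero] at h0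
  rw [iteratedDeriv_one] at h1
  obtain ⟨c0, hc0⟩ := h0.bound
  obtain ⟨c1, hc1⟩ := h1.bound
  obtain ⟨ε, hε, hball⟩ := Metric.eventually_nhds_iff.1 (hc0.and hc1)
  set M := max 1 (max c0 c1) with hMdef
  have hM : 1 ≤ M := le_max_left _ _
  have hMc0 : c0 ≤ M := (le_max_left _ _).trans (le_max_right _ _)
  have hMc1 : c1 ≤ M := (le_max_right _ _).trans (le_max_right _ _)
  have hM0 : 0 < M := by linarith
  set r := min (ε / 2) (1 / (100 * M)) with hr
  have hr0 : 0 < r := by positivity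
  have hMr : M * r ≤ 1 / 100 := by
    calc M * r ≤ M * (1 / (100 * M)) := by gcongr; exact min_le_right _ _
      _ = 1 / 100 := by field_simp
  have hrε : r < ε := lt_of_le_of_lt (min_le_left _ _) (by linarith)
  have hb0 : ∀ x, |x| ≤ r → |f x| ≤ M * |x| ^ 5 := by
    intro x hx
    have := (hball (y := x) (by rw [Real.dist_eq, sub_zero]; linarith)).1
    simp only [Real.norm_eq_abs, abs_pow, abs_abs, Nat.sub_zero] at this
    exact this.trans (by gcongr)
  have hb1 : ∀ x, |x| ≤ r → |deriv f x| ≤ M * |x| ^ 4 := by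
    intro x hx
    have := (hball (y := x) (by rw [Real.dist_eq, sub_zero]; linarith)).2
    simp only [Real.norm_eq_abs, abs_pow, abs_abs] at this
    exact this.trans (by norm_num; gcongr)
  have hem : ∀ᶠ v in 𝓝 (0:ℝ), |xm v| ≤ r := by
    filter_upwards [hnear_m (Metric.ball_mem_nhds 0 hr0)] with v hv
    have : dist (xm v) 0 < r := hv
    rw [Real.dist_eq, sub_zero] at this; exact this.le
  have heM : ∀ᶠ v in 𝓝 (0:ℝ), |xM v| ≤ r := by
    filter_upwards [hnear_M (Metric.ball_mem_nhds 0 hr0)] with v hv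
    have : dist (xM v) 0 < r := hv
    rw [Real.dist_eq, sub_zero] at this; exact this.le
  obtain ⟨δ, hδ, hδb⟩ := Metric.eventually_nhds_iff.1 (hem.and heM)
  refine ⟨min δ (min v₁ 1), by positivity, 12800 * M, by positivity, ?_⟩
  intro v hv
  have hvδ : |v| < δ := hv.trans_le (min_le_left _ _)
  have hvv : |v| < v₁ := hv.trans_le ((min_le_right _ _).trans (min_le_left _ _))
  have hv1 : |v| ≤ 1 := (hv.trans_le ((min_le_right _ _).trans (min_le_right _ _))).le
  by_cases hvz : v = 0
  · subst hvz; simp [hT0]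
  have hvp : 0 < |v| := abs_pos.2 hvz
  obtain ⟨am, aM, Vm, VM⟩ := hext v hvp hvv
  obtain ⟨rm, rM⟩ := hδb (y := v) (by rwa [Real.dist_eq, sub_zero])
  rw [hVe] at Vm VM
  obtain ⟨iP, bP⟩ := half l M r f hl hM hMr hfd
    (fun x hx hxr => by have := hb0 x (by rwa [abs_of_nonneg hx]); rwa [abs_of_nonneg hx] at this)
    (fun x hx hxr => by have := hb1 x (by rwa [abs_of_nonneg hx]); rwa [abs_of_nonneg hx] at this)
    |v| (xM v) hvp hv1 aM ((le_abs_self _).trans rM) (by rw [sq_abs]; linarith)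
  obtain ⟨iN, bN⟩ := half l M r (fun x => f (-x)) hl hM hMr (hfd.comp differentiable_neg)
    (fun x hx hxr => by
      have := hb0 (-x) (by rwa [abs_neg, abs_of_nonneg hx])
      rwa [abs_neg, abs_of_nonneg hx] at this)
    (fun x hx hxr => by
      have := hb1 (-x) (by rwa [abs_neg, abs_of_nonneg hx])
      rw [deriv_comp_neg, abs_neg]
      rwa [abs_neg x, abs_of_nonneg hx] at this)
    |v| (-xm v) hvp hv1 (by linarith) ((neg_le_abs _).trans rm)
    (by rw [sq_abs, neg_neg, neg_sq, Even.neg_pow (by decide : Even 4)]; linarith)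
  set I : ℝ → ℝ := fun x => (√(v ^ 2 - (x ^ 2 + l * x ^ 4 / 2 + 2 * f x)))⁻¹ with hI
  have eN : (fun x => (√(|v| ^ 2 - (x ^ 2 + l * x ^ 4 / 2 + 2 * f (-x))))⁻¹) = fun x => I (-x) := by
    funext x
    simp only [hI]
    rw [sq_abs, neg_sq, Even.neg_pow (by decide : Even 4)]
  have eP : (fun x => (√(|v| ^ 2 - (x ^ 2 + l * x ^ 4 / 2 + 2 * f x)))⁻¹) = I := by
    funext x
    simp only [hI]
    rw [sq_abs]
  rw [eP] at iP bP
  simp only [eN] at iN bN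
  rw [intervalIntegral.integral_comp_neg, neg_neg, neg_zero] at bN
  have iN' : IntervalIntegrable I MeasureTheory.volume (xm v) 0 := by
    have := (IntervalIntegrable.iff_comp_neg (f := I) (a := 0) (b := xm v)).2
      (by simpa using iN)
    exact this.symm
  have hTe : T v = 2 * ((∫ x in (xm v)..0, I x) + ∫ x in (0:ℝ)..(xM v), I x) := by
    rw [hT v hvp hvv, intervalIntegral.integral_add_adjacent_intervals iN' iP]
    have : ∀ x, (√(v ^ 2 / 2 - V x))⁻¹ = √2 * I x := by
      intro x
      simp only [hI]
      rw [hVe, show v ^ 2 / 2 - (x ^ 2 / 2 + l * x ^ 4 / 4 + f x)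
        = (v ^ 2 - (x ^ 2 + l * x ^ 4 / 2 + 2 * f x)) / 2 by ring,
        Real.sqrt_div' _ (by norm_num), inv_div, div_eq_mul_inv]
    simp only [this]
    rw [intervalIntegral.integral_const_mul, ← mul_assoc, Real.mul_self_sqrt (by norm_num)]
  rw [hTe]
  rw [sq_abs] at bN bP
  obtain ⟨u1, u2⟩ := abs_le.1 bN
  obtain ⟨u3, u4⟩ := abs_le.1 bP
  rw [abs_le]
  constructor <;> linarith

/-- with `Γ_{n,t} = (8t/(3πn))^{1/2}`, the period map of a
perturbed quartic potential satisfies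
`|(n/2)T(Γ_{n,t}v) - ℓt(1-v²) - (nπ - ℓt)| ≤ C t^{3/2}/n^{1/2}`
for `n ≥ 1`, `t ∈ (0, Kn]`, `v ∈ [-1,1]`. -/
theorem statement17 (V f : ℝ → ℝ) (l : ℝ) (hV : PerturbedQuartic V f l)
    (v₁ : ℝ) (hv₁ : 0 < v₁)
    -- the extreme points `x^m(v) ≤ 0 ≤ x^M(v)`, determined near 0 by
    -- `V(x^m(v)) = V(x^M(v)) = v²/2`:
    (xm xM : ℝ → ℝ)
    (hext : ∀ v : ℝ, 0 < |v| → |v| < v₁ → xm v ≤ 0 ∧ 0 ≤ xM v ∧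
      V (xm v) = v ^ 2 / 2 ∧ V (xM v) = v ^ 2 / 2)
    (hnear_m : Filter.Tendsto xm (𝓝 0) (𝓝 0))
    (hnear_M : Filter.Tendsto xM (𝓝 0) (𝓝 0))
    -- the period map `T(v) = √2 ∫_{x^m(v)}^{x^M(v)} (v²/2 - V(x))^{-1/2} dx`, `T(0) = 2π`:
    (T : ℝ → ℝ) (hT0 : T 0 = 2 * Real.pi)
    (hT : ∀ v : ℝ, 0 < |v| → |v| < v₁ →
      T v = Real.sqrt 2 * ∫ x in (xm v)..(xM v), (Real.sqrt (v ^ 2 / 2 - V x))⁻¹) :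
    ∃ K > (0 : ℝ), ∃ C > (0 : ℝ),
      ∀ n : ℕ, 1 ≤ n → ∀ t : ℝ, 0 < t → t ≤ K * (n : ℝ) → ∀ v ∈ Set.Icc (-1 : ℝ) 1,
        |(n : ℝ) / 2 * T (Real.sqrt (8 * t / (3 * Real.pi * (n : ℝ))) * v)
            - l * t * (1 - v ^ 2) - ((n : ℝ) * Real.pi - l * t)|
          ≤ C * t ^ ((3 : ℝ) / 2) / Real.sqrt (n : ℝ) := by
  obtain ⟨d, hd, C₀, hC₀, hB⟩ := period_bound V f l hV v₁ hv₁ xm xM hext hnear_m hnear_M T hT0 hT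
  refine ⟨d ^ 2 / 4, by positivity, C₀, hC₀, ?_⟩
  intro n hn t ht htK v hv
  have hn0 : (0:ℝ) < n := by exact_mod_cast hn
  have hvabs : |v| ≤ 1 := abs_le.2 hv
  set g := √(8 * t / (3 * π * (n : ℝ))) with hg
  have hg0 : 0 ≤ g := Real.sqrt_nonneg _
  have hg2 : g ^ 2 = 8 * t / (3 * π * n) := Real.sq_sqrt (by positivity)
  have hle : 8 * t / (3 * π * n) ≤ t / n := by
    rw [div_le_div_iff₀ (by positivity) hn0]
    have := Real.pi_gt_three
    have h9 : 9 * (t * n) ≤ 3 * π * (t * n) := by gcongr; linarith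
    have : 0 < t * n := by positivity
    linarith
  have htn : t / n ≤ d ^ 2 / 4 := by rwa [div_le_iff₀ hn0]
  have hgd : g < d := by nlinarith
  have hgv : |g * v| ≤ g := by
    rw [abs_mul, abs_of_nonneg hg0]
    exact mul_le_of_le_one_right hg0 hvabs
  have hmain := hB (g * v) (hgv.trans_lt hgd)
  have hs : g ≤ √(t / n) := Real.sqrt_le_sqrt hle
  have hg3 : |g * v| ^ 3 ≤ t / n * √(t / n) := by
    calc |g * v| ^ 3 ≤ g ^ 3 := by gcongr
      _ = g ^ 2 * g := by ring
      _ ≤ t / n * √(t / n) := by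
        rw [hg2]; gcongr
  have e : (n : ℝ) / 2 * T (g * v) - l * t * (1 - v ^ 2) - ((n : ℝ) * π - l * t)
      = n / 2 * (T (g * v) - (2 * π - 3 * π / 4 * l * (g * v) ^ 2)) := by
    rw [mul_pow, hg2]
    field_simp
    ring
  have htp : t ^ ((3 : ℝ) / 2) = t * √t := by
    rw [show (3 : ℝ) / 2 = 1 + 1 / 2 by norm_num, Real.rpow_add ht, Real.rpow_one,
      Real.sqrt_eq_rpow]
  rw [e, abs_mul, abs_of_pos (by positivity : (0:ℝ) < n / 2), htp]
  calc (n : ℝ) / 2 * |T (g * v) - (2 * π - 3 * π / 4 * l * (g * v) ^ 2)|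
      ≤ n * (C₀ * (t / n * √(t / n))) := by
        gcongr
        · linarith
        · exact hmain.trans (by gcongr)
    _ = C₀ * (t * √t) / √n := by
        rw [Real.sqrt_div ht.le]
        field_simp
end

section
/- Let V be a C⁵ perturbed quartic potential with ℓ ∈ {−1,1} equal to the sign of V⁽⁴⁾(0), and let Γ_{n,t} = (8t/(3πn))^{1/2}. There exist K > 0, C > 0 and N ≥ 1 such that for every integer n ≥ N, every v ∈ [−1,1] and every t ∈ (0, K n^{3/5}]: the solution x(Γ_{n,t}v; ·) of ẍ = −V'(x) with initial position 0 and initial velocity Γ_{n,t}v is defined at time t and satisfies |x(Γ_{n,t}v; t) − Γ_{n,t} v sin t| ≤ C Γ_{n,t}³ t. -/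
open Real Filter Asymptotics Topology

/-- `x v` is the solution of the Euler--Lagrange equation `ẍ = -V'(x)` with
initial conditions `x(v;0) = 0`, `ẋ(v;0) = v`, for every `|v| ≤ v₀`. -/
def SolutionFamily (V : ℝ → ℝ) (x : ℝ → ℝ → ℝ) (v₀ : ℝ) : Prop :=
  ∀ v : ℝ, |v| ≤ v₀ → ContDiff ℝ 2 (x v) ∧ x v 0 = 0 ∧ deriv (x v) 0 = v ∧
    ∀ t : ℝ, deriv (deriv (x v)) t = -(deriv V (x v t))

lemma aux_potential (V f : ℝ → ℝ) (l : ℝ) (hV : PerturbedQuartic V f l) :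
    ∃ δ > (0 : ℝ), ∃ M > (0 : ℝ), V 0 = 0 ∧ Differentiable ℝ V ∧
      ∀ x : ℝ, |x| ≤ δ → x ^ 2 / 4 ≤ V x ∧ |deriv V x - x| ≤ M * |x| ^ 3 := by
  obtain ⟨hl, hf, hVe, hO⟩ := hV
  have hfd : Differentiable ℝ f := hf.differentiable (by norm_num)
  have h0 := hO 0 (by norm_num)
  have h1 := hO 1 (by norm_num)
  rw [iteratedDeriv_zero] at h0
  rw [iteratedDeriv_one] at h1
  obtain ⟨c0, hc0, h0⟩ := h0.exists_pos
  obtain ⟨c1, hc1, h1⟩ := h1.exists_pos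
  have h01 := h0.bound.and h1.bound
  obtain ⟨ε, hε, hb⟩ := Metric.eventually_nhds_iff.1 h01
  have hVd : ∀ x, HasDerivAt V (x + l * x ^ 3 + deriv f x) x := by
    intro x
    have hV' : V = fun x : ℝ => x ^ 2 / 2 + l * x ^ 4 / 4 + f x := funext hVe
    rw [hV']
    have a := (((hasDerivAt_pow 2 x).div_const 2).add
      (((hasDerivAt_pow 4 x).const_mul l).div_const 4)).add (hfd x).hasDerivAt
    refine a.congr_deriv ?_
    norm_num
    ring
  have hla : |l| = 1 := by rcases hl with h | h <;> simp [h]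
  refine ⟨min (ε / 2) (min (1 / 2) (1 / (4 * c0))), by positivity, 1 + c1, by positivity, ?_,
    fun x => (hVd x).differentiableAt, ?_⟩
  · have := (hb (y := 0) (by simpa using hε)).1
    have hf0 : f 0 = 0 := by simpa using this
    rw [hVe, hf0]; simp
  · intro x hx
    have hx1 : |x| ≤ ε / 2 := hx.trans (min_le_left _ _)
    have hx2 : |x| ≤ 1 / 2 := hx.trans ((min_le_right _ _).trans (min_le_left _ _))
    have hx3 : |x| ≤ 1 / (4 * c0) := hx.trans ((min_le_right _ _).trans (min_le_right _ _))
    obtain ⟨b0, b1⟩ := hb (y := x) (by rw [Real.dist_eq, sub_zero]; linarith)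
    simp only [Real.norm_eq_abs, abs_pow, abs_abs] at b0 b1
    norm_num at b0 b1
    have hp := abs_nonneg x
    have hc : c0 * |x| ≤ 1 / 4 := by
      rw [le_div_iff₀ (by positivity)] at hx3; linarith
    have hsq : |x| ^ 2 = x ^ 2 := sq_abs x
    have hq : |x| ^ 2 ≤ 1 / 4 := by nlinarith
    constructor
    · rw [hVe]
      have e1 : c0 * |x| ^ 5 ≤ x ^ 2 / 16 := by
        have : c0 * |x| ^ 5 = (c0 * |x|) * |x| ^ 2 * |x| ^ 2 := by ring
        rw [this, ← hsq]
        have : (c0 * |x|) * |x| ^ 2 ≤ 1 / 4 * (1 / 4) := by gcongr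
        nlinarith [sq_nonneg |x|]
      have e2 : -(x ^ 2 / 4) ≤ l * x ^ 4 := by
        have : x ^ 4 ≤ x ^ 2 / 4 := by
          rw [hsq] at hq; nlinarith [sq_nonneg x]
        have h4 : 0 ≤ x ^ 4 := by positivity
        rcases hl with h | h <;> rw [h] <;> nlinarith [sq_nonneg x]
      have := (abs_le.1 b0).1
      nlinarith [sq_nonneg x]
    · rw [(hVd x).deriv]
      have e : x + l * x ^ 3 + deriv f x - x = l * x ^ 3 + deriv f x := by ring
      rw [e]
      refine (abs_add_le _ _).trans ?_
      rw [abs_mul, hla, abs_pow]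
      have : c1 * |x| ^ 4 ≤ c1 * |x| ^ 3 := by
        gcongr ?_ * ?_
        exact pow_le_pow_of_le_one hp (by linarith) (by norm_num)
      linarith

lemma aux_solution (V y : ℝ → ℝ) (δ M w : ℝ) (hδ : 0 < δ) (hM : 0 < M) (hV0 : V 0 = 0)
    (hVd : Differentiable ℝ V)
    (hV : ∀ x : ℝ, |x| ≤ δ → x ^ 2 / 4 ≤ V x ∧ |deriv V x - x| ≤ M * |x| ^ 3)
    (hw : |w| ≤ δ / 2) (hy : ContDiff ℝ 2 y) (hy0 : y 0 = 0) (hy1 : deriv y 0 = w)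
    (hode : ∀ t, deriv (deriv y) t = -(deriv V (y t))) (t : ℝ) (ht : 0 < t) :
    |y t - w * Real.sin t| ≤ (8 * M) * |w| ^ 3 * t := by
  have hd1 : ∀ s, HasDerivAt y (deriv y s) s :=
    fun s => (hy.differentiable (by norm_num) s).hasDerivAt
  have hd2 : ∀ s, HasDerivAt (deriv y) (-(deriv V (y s))) s := by
    intro s
    rw [← hode]
    have : ContDiff ℝ 1 (deriv y) := by
      have h2 : ContDiff ℝ (1 + 1) y := by norm_num; exact hy
      exact (contDiff_succ_iff_deriv.1 h2).2.2
    exact (this.differentiable (by norm_num) s).hasDerivAt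
  have hE : ∀ s, (deriv y s) ^ 2 / 2 + V (y s) = w ^ 2 / 2 := by
    have hder : ∀ s, HasDerivAt (fun s => (deriv y s) ^ 2 / 2 + V (y s)) 0 s := by
      intro s
      have a := (((hd2 s).pow 2).div_const 2).add ((hVd (y s)).hasDerivAt.comp s (hd1 s))
      refine a.congr_deriv ?_
      norm_num
      ring
    intro s
    have := is_const_of_deriv_eq_zero (fun s => (hder s).differentiableAt)
      (fun s => (hder s).deriv) s 0
    simp only [hy0, hy1, hV0, add_zero] at this
    exact this
  have hw2 : w ^ 2 ≤ δ ^ 2 / 4 := by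
    rw [← sq_abs w]; nlinarith [abs_nonneg w]
  have hbd : ∀ s, |y s| ≤ δ := by
    intro s
    by_contra! h
    have hc : Continuous (fun s => |y s|) := hy.continuous.abs
    have : δ ∈ Set.range (fun s => |y s|) := by
      apply mem_range_of_exists_le_of_exists_ge hc
      · exact ⟨0, by simp [hy0, hδ.le]⟩
      · exact ⟨s, h.le⟩
    obtain ⟨r, hr⟩ := this
    have hr' : |y r| = δ := hr
    have h1 := (hV (y r) hr'.le).1
    have h2 := hE r
    rw [← sq_abs (y r), hr'] at h1
    nlinarith [sq_nonneg (deriv y r)]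
  have hbd2 : ∀ s, |y s| ≤ 2 * |w| := by
    intro s
    have h1 := (hV (y s) (hbd s)).1
    have h2 := hE s
    apply abs_le_of_sq_le_sq' _ (by positivity) |> abs_le.2
    rw [mul_pow, sq_abs]
    nlinarith [sq_nonneg (deriv y s), sq_nonneg w]
  have hh : ∀ s, HasDerivAt (fun s => deriv y s * Real.sin (t - s) + y s * Real.cos (t - s))
      (-(deriv V (y s) - y s) * Real.sin (t - s)) s := by
    intro s
    have hts : HasDerivAt (fun s => t - s) (-1) s := by
      simpa using (hasDerivAt_id s).const_sub t
    have a := ((hd2 s).mul hts.sin).add ((hd1 s).mul hts.cos)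
    refine a.congr_deriv ?_
    ring
  have key := Convex.norm_image_sub_le_of_norm_hasDerivWithin_le (s := Set.univ)
    (C := 8 * M * |w| ^ 3) (x := 0) (y := t)
    (fun s _ => (hh s).hasDerivWithinAt) (fun s _ => by
      rw [norm_mul, norm_neg, Real.norm_eq_abs, Real.norm_eq_abs]
      have h1 := (hV (y s) (hbd s)).2
      have h2 : M * |y s| ^ 3 ≤ M * (2 * |w|) ^ 3 := by
        gcongr; exact hbd2 s
      have h3 := Real.abs_sin_le_one (t - s)
      calc _ ≤ |deriv V (y s) - y s| * 1 := by gcongr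
        _ ≤ _ := by linarith [mul_pow 2 |w| 3]) convex_univ trivial trivial
  simpa [hy0, hy1, abs_of_pos ht] using key

/-- with `Γ_{n,t} = (8t/(3πn))^{1/2}`, the solution with initial
velocity `Γ_{n,t}v` satisfies `|x(Γ_{n,t}v; t) - Γ_{n,t}v sin t| ≤ C Γ_{n,t}³ t`
for all `n ≥ N`, `v ∈ [-1,1]` and `t ∈ (0, K n^{3/5}]`. -/
theorem statement18 (V f : ℝ → ℝ) (l : ℝ) (hV : PerturbedQuartic V f l)
    (v₁ : ℝ) (hv₁ : 0 < v₁) (x : ℝ → ℝ → ℝ) (hx : SolutionFamily V x v₁) :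
    ∃ K > (0 : ℝ), ∃ C > (0 : ℝ), ∃ N : ℕ, 1 ≤ N ∧
      ∀ n : ℕ, N ≤ n → ∀ v ∈ Set.Icc (-1 : ℝ) 1,
        ∀ t ∈ Set.Ioc (0 : ℝ) (K * (n : ℝ) ^ ((3 : ℝ) / 5)),
          -- `x(Γ_{n,t}v; ·)` is defined (the initial velocity is admissible):
          |Real.sqrt (8 * t / (3 * Real.pi * (n : ℝ))) * v| ≤ v₁ ∧
          |x (Real.sqrt (8 * t / (3 * Real.pi * (n : ℝ))) * v) t -
              Real.sqrt (8 * t / (3 * Real.pi * (n : ℝ))) * v * Real.sin t|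
            ≤ C * Real.sqrt (8 * t / (3 * Real.pi * (n : ℝ))) ^ 3 * t := by
  obtain ⟨δ, hδ, M, hM, hV0, hVd, hVb⟩ := aux_potential V f l hV
  refine ⟨(min v₁ (δ / 2)) ^ 2, by positivity, 8 * M, by positivity, 1, le_rfl, ?_⟩
  intro n hn v hv t ht
  have hn1 : (1 : ℝ) ≤ n := by exact_mod_cast hn
  set K := min v₁ (δ / 2) with hK
  have hKpos : 0 < K := by positivity
  have hG : Real.sqrt (8 * t / (3 * Real.pi * (n : ℝ))) ≤ K := by
    apply Real.sqrt_le_iff.2 ⟨hKpos.le, ?_⟩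
    have hp : (n : ℝ) ^ ((3 : ℝ) / 5) ≤ n := by
      calc (n : ℝ) ^ ((3 : ℝ) / 5) ≤ (n : ℝ) ^ (1 : ℝ) :=
            Real.rpow_le_rpow_of_exponent_le hn1 (by norm_num)
        _ = n := Real.rpow_one _
    have ht2 : t ≤ K ^ 2 * n := ht.2.trans (by gcongr)
    have hpi := Real.pi_gt_three
    rw [div_le_iff₀ (by positivity)]
    have : 0 < K ^ 2 * n := by positivity
    nlinarith
  set G := Real.sqrt (8 * t / (3 * Real.pi * (n : ℝ))) with hGdef
  have hG0 : 0 ≤ G := Real.sqrt_nonneg _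
  have hwG : |G * v| ≤ G := by
    rw [abs_mul, abs_of_nonneg hG0]
    exact mul_le_of_le_one_right hG0 (abs_le.2 hv)
  have hwv : |G * v| ≤ v₁ := hwG.trans (hG.trans (min_le_left _ _))
  refine ⟨hwv, ?_⟩
  obtain ⟨a1, a2, a3, a4⟩ := hx (G * v) hwv
  have := aux_solution V (x (G * v)) δ M (G * v) hδ hM hV0 hVd hVb
    (hwG.trans (hG.trans (min_le_right _ _))) a1 a2 a3 a4 t ht.1
  refine this.trans ?_
  have := ht.1
  gcongr
end
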